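/- Let 𝒜 be a finite set of positive integers with at least two elements, and let F(𝒜) = {x ∈ (0,1) irrational : a_i(x) ∈ 𝒜 for all i ≥ 1}. If the Hausdorff dimension of F(𝒜) is strictly greater than 1/2, then F(𝒜) contains infinitely many numbers that are normal to every integer base q ≥ 2. In particular, there exist infinitely many numbers normal to every base q ≥ 2 all of whose continued fraction partial quotients belong to {1, 2}. -/

import Mathlib

open Filter MeasureTheory Topology
open scoped Classical ENNReal

/-- The `(n+1)`-st digit (i.e. `ε_{n+1}`, `0`-indexed by `n`) of the base-`q` expansion of `x`,
chosen as the greedy expansion (never eventually equal to `q - 1`). -/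
noncomputable def qdigit (q : ℕ) (x : ℝ) (n : ℕ) : ℕ :=
  (⌊x * (q : ℝ) ^ (n + 1)⌋).toNat % q

/-- `x` is normal to base `q`: every word `d` of length `m ≥ 1` over `{0, …, q-1}` occurs in the
base-`q` digit sequence of `x` with frequency `q^{-m}`. -/
def IsNormal (q : ℕ) (x : ℝ) : Prop :=
  ∀ m : ℕ, 0 < m → ∀ d : Fin m → ℕ, (∀ i, d i < q) →
    Tendsto
      (fun N : ℕ =>
        (((Finset.range N).filter fun n =>
          ∀ i : Fin m, qdigit q x (n + (i : ℕ)) = d i).card : ℝ) / N)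
      atTop (𝓝 (((q : ℝ) ^ m)⁻¹))

/-- The Gauss map `T x = 1/x mod 1`. -/
noncomputable def gaussMap (x : ℝ) : ℝ := Int.fract x⁻¹

/-- `cfa n x` is the partial quotient `a_{n+1}(x)` of the regular continued fraction expansion
of `x`, generated by the Gauss map: `a_1(x) = ⌊1/x⌋` and `a_{k+1}(x) = a_k (T x)`. -/
noncomputable def cfa : ℕ → ℝ → ℕ
  | 0, x => ⌊x⁻¹⌋₊
  | n + 1, x => cfa n (gaussMap x)

/-- The set `F(𝒜)` of irrationals in `(0,1)` all of whose partial quotients lie in `𝒜`. -/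
def cfRestricted (A : Set ℕ) : Set ℝ :=
  {x : ℝ | x ∈ Set.Ioo (0 : ℝ) 1 ∧ Irrational x ∧ ∀ i : ℕ, cfa i x ∈ A}

section -- part C1

/-- two-by-two real matrices -/
abbrev Mat2 := Matrix (Fin 2) (Fin 2) ℝ

/-- Moebius action. -/
noncomputable def mob (g : Mat2) (y : ℝ) : ℝ := (g 0 0 * y + g 0 1) / (g 1 0 * y + g 1 1)

structure Good (g : Mat2) : Prop where
  n00 : 0 ≤ g 0 0
  n01 : 0 ≤ g 0 1
  n10 : 0 ≤ g 1 0
  one : 1 ≤ g 1 1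
  h01 : g 0 1 ≤ g 1 1
  h10 : g 1 0 ≤ g 1 1
  hr : g 0 0 + g 0 1 ≤ g 1 0 + g 1 1
  hc : g 0 0 + g 1 0 ≤ g 0 1 + g 1 1

theorem Good.id : Good (1 : Mat2) := by
  constructor <;> simp

theorem Good.transpose {g : Mat2} (h : Good g) : Good g.transpose := by
  obtain ⟨a, b, c, d, e, f, g, h⟩ := h
  constructor <;> simp only [Matrix.transpose_apply] <;> assumption

theorem Good.mul {g k : Mat2} (hg : Good g) (hk : Good k) : Good (g * k) := by
  obtain ⟨a, b, c, d, e, f, u, v⟩ := hg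
  obtain ⟨a', b', c', d', e', f', u', v'⟩ := hk
  constructor <;> simp only [Matrix.mul_apply, Fin.sum_univ_two]
  · positivity
  · have : 0 ≤ k 1 1 := by linarith
    positivity
  · have : 0 ≤ g 1 1 := by linarith
    positivity
  · nlinarith [mul_nonneg c b']
  · nlinarith [mul_nonneg (sub_nonneg.2 e) (sub_nonneg.2 e'), mul_nonneg (sub_nonneg.2 u) b']
  · nlinarith [mul_nonneg (sub_nonneg.2 f) (sub_nonneg.2 f'), mul_nonneg (sub_nonneg.2 v') c]
  · nlinarith [mul_nonneg (sub_nonneg.2 e) (sub_nonneg.2 u'), mul_nonneg (sub_nonneg.2 u) (add_nonneg a' b')]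
  · nlinarith [mul_nonneg (sub_nonneg.2 f') (sub_nonneg.2 v), mul_nonneg (sub_nonneg.2 v') (add_nonneg a c)]

theorem Good.den_pos {g : Mat2} (h : Good g) {y : ℝ} (hy : 0 ≤ y) : 0 < g 1 0 * y + g 1 1 := by
  have := mul_nonneg h.n10 hy
  linarith [h.one]

theorem Good.den_ge {g : Mat2} (h : Good g) {y : ℝ} (hy : 0 ≤ y) : g 1 1 ≤ g 1 0 * y + g 1 1 := by
  have := mul_nonneg h.n10 hy
  linarith [h.one]

theorem Good.den_le {g : Mat2} (h : Good g) {y : ℝ} (hy : 0 ≤ y) (hy1 : y ≤ 1) :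
    g 1 0 * y + g 1 1 ≤ 2 * g 1 1 := by
  have := mul_le_mul h.h10 hy1 hy (by linarith [h.one])
  linarith

theorem Good.mob_nonneg {g : Mat2} (h : Good g) {y : ℝ} (hy : 0 ≤ y) : 0 ≤ mob g y :=
  div_nonneg (add_nonneg (mul_nonneg h.n00 hy) h.n01) (h.den_pos hy).le

theorem Good.mob_le_one {g : Mat2} (h : Good g) {y : ℝ} (hy : 0 ≤ y) (hy1 : y ≤ 1) :
    mob g y ≤ 1 := by
  unfold mob
  rw [div_le_one (h.den_pos hy)]
  nlinarith [h.hr, h.h01, mul_nonneg (sub_nonneg.2 h.hr) hy,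
    mul_nonneg (sub_nonneg.2 h.h01) (sub_nonneg.2 hy1)]

theorem mob_mul {g k : Mat2} (hg : Good g) (hk : Good k) {y : ℝ} (hy : 0 ≤ y) :
    mob (g * k) y = mob g (mob k y) := by
  have h1 := hk.den_pos hy
  have h2 := hg.den_pos (hk.mob_nonneg hy)
  have h3 := (hg.mul hk).den_pos hy
  unfold mob at *
  simp only [Matrix.mul_apply, Fin.sum_univ_two] at *
  rw [div_eq_div_iff h3.ne' h2.ne']
  field_simp
  ring

theorem mob_sub {g : Mat2} (h : Good g) {y z : ℝ} (hy : 0 ≤ y) (hz : 0 ≤ z) :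
    mob g y - mob g z = g.det * (y - z) / ((g 1 0 * y + g 1 1) * (g 1 0 * z + g 1 1)) := by
  have h1 := h.den_pos hy
  have h2 := h.den_pos hz
  unfold mob
  rw [Matrix.det_fin_two, div_sub_div _ _ h1.ne' h2.ne']
  congr 1
  ring

theorem mob_hasDerivAt {g : Mat2} (h : Good g) {y : ℝ} (hy : 0 ≤ y) :
    HasDerivAt (mob g) (g.det / (g 1 0 * y + g 1 1) ^ 2) y := by
  have h1 := h.den_pos hy
  have e1 : HasDerivAt (fun y => g 0 0 * y + g 0 1) (g 0 0) y := by
    simpa using ((hasDerivAt_id y).const_mul (g 0 0)).add_const (g 0 1)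
  have e2 : HasDerivAt (fun y => g 1 0 * y + g 1 1) (g 1 0) y := by
    simpa using ((hasDerivAt_id y).const_mul (g 1 0)).add_const (g 1 1)
  have := e1.div e2 h1.ne'
  have e : g.det = g 0 0 * (g 1 0 * y + g 1 1) - (g 0 0 * y + g 0 1) * g 1 0 := by
    rw [Matrix.det_fin_two]; ring
  rw [e]
  exact this

section words
variable {ι : Type*}

/-- matrix of a word -/
noncomputable def wmat (g : ι → Mat2) {n : ℕ} (w : Fin n → ι) : Mat2 :=
  (List.ofFn fun i => g (w i)).prod

theorem wmat_zero (g : ι → Mat2) (w : Fin 0 → ι) : wmat g w = 1 := by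
  simp [wmat]

theorem wmat_cons (g : ι → Mat2) {n : ℕ} (i : ι) (w : Fin n → ι) :
    wmat g (Fin.cons i w : Fin (n+1) → ι) = g i * wmat g w := by
  simp [wmat, List.ofFn_succ]

theorem wmat_snoc (g : ι → Mat2) {n : ℕ} (w : Fin n → ι) (i : ι) :
    wmat g (Fin.snoc w i : Fin (n+1) → ι) = wmat g w * g i := by
  unfold wmat
  rw [List.ofFn_succ', List.concat_eq_append, List.prod_append]
  simp

variable [Fintype ι]

theorem sum_cons {E : Type*} [AddCommMonoid E] {n : ℕ} (φ : (Fin (n+1) → ι) → E) :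
    ∑ w, φ w = ∑ i, ∑ w : Fin n → ι, φ (Fin.cons i w) := by
  rw [← Fintype.sum_prod_type', ← (Fin.consEquiv (fun _ => ι)).sum_comp]
  rfl

theorem sum_snoc {E : Type*} [AddCommMonoid E] {n : ℕ} (φ : (Fin (n+1) → ι) → E) :
    ∑ w, φ w = ∑ i, ∑ w : Fin n → ι, φ (Fin.snoc w i) := by
  rw [← Fintype.sum_prod_type', ← (Fin.snocEquiv (fun _ => ι)).sum_comp]
  rfl

end words

structure Sys {ι : Type*} [Fintype ι] (g : ι → Mat2) (X Y l c : ℝ) : Prop where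
  good : ∀ i, Good (g i)
  det : ∀ i, (g i).det = 1
  lo : ∀ i, X ≤ g i 1 1
  hi : ∀ i, 2 * g i 1 1 ≤ X * Y
  hY : 2 ≤ Y
  hX : Y ≤ X
  card : X * Y ^ 10 ≤ Fintype.card ι
  cpos : 0 < c
  low : ∀ i s, 0 ≤ s → s ≤ 1 → l ≤ mob (g i).transpose s
  l1 : l ≤ 1
  sep : ∀ i j s s', i ≠ j → 0 ≤ s → s ≤ 1 → 0 ≤ s' → s' ≤ 1 → |s - s'| ≤ 1 - l →
    c ≤ |mob (g i).transpose s - mob (g j).transpose s'|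
  disj : ∀ i j y y', i ≠ j → 0 < y → y < 1 → 0 < y' → y' < 1 → mob (g i) y ≠ mob (g j) y'

namespace Sys
variable {ι : Type*} [Fintype ι] {g : ι → Mat2} {X Y l c : ℝ}

theorem wgood (S : Sys g X Y l c) {n : ℕ} (w : Fin n → ι) : Good (wmat g w) := by
  induction n with
  | zero => rw [wmat_zero]; exact Good.id
  | succ n ih =>
    rw [← Fin.cons_self_tail w, wmat_cons]
    exact (S.good _).mul (ih _)

theorem wdet (S : Sys g X Y l c) {n : ℕ} (w : Fin n → ι) : (wmat g w).det = 1 := by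
  induction n with
  | zero => rw [wmat_zero]; simp
  | succ n ih =>
    rw [← Fin.cons_self_tail w, wmat_cons, Matrix.det_mul, S.det, ih, one_mul]

theorem Xpos (S : Sys g X Y l c) : 0 < X := by linarith [S.hY, S.hX]
theorem Ypos (S : Sys g X Y l c) : 0 < Y := by linarith [S.hY, S.hX]

theorem wlo (S : Sys g X Y l c) {n : ℕ} (w : Fin n → ι) : X ^ n ≤ wmat g w 1 1 := by
  induction n with
  | zero => rw [wmat_zero]; simp
  | succ n ih =>
    rw [← Fin.cons_self_tail w, wmat_cons, pow_succ']
    simp only [Matrix.mul_apply, Fin.sum_univ_two]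
    have h1 := mul_nonneg (S.good (w 0)).n10 (S.wgood (Fin.tail w)).n01
    have h2 := mul_le_mul (S.lo (w 0)) (ih (Fin.tail w)) (pow_nonneg S.Xpos.le n)
      (by linarith [(S.good (w 0)).one])
    linarith

theorem whi (S : Sys g X Y l c) {n : ℕ} (w : Fin n → ι) : wmat g w 1 1 ≤ (X * Y) ^ n := by
  induction n with
  | zero => rw [wmat_zero]; simp
  | succ n ih =>
    rw [← Fin.cons_self_tail w, wmat_cons, pow_succ']
    simp only [Matrix.mul_apply, Fin.sum_univ_two]
    have hg := S.good (w 0)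
    have hk := S.wgood (Fin.tail w)
    have h1 := mul_le_mul hg.h10 hk.h01 hk.n01 (by linarith [hg.one])
    have h2 := mul_le_mul (S.hi (w 0)) (ih (Fin.tail w)) (by linarith [hk.one])
      (mul_nonneg S.Xpos.le S.Ypos.le)
    linarith

end Sys

end

section -- part C2

namespace Sys
variable {ι : Type*} [Fintype ι] {g : ι → Mat2} {X Y l c : ℝ}

/-- ratio of consecutive denominators -/
noncomputable def theta (g : ι → Mat2) {n : ℕ} (w : Fin n → ι) : ℝ := mob (wmat g w).transpose 0

theorem theta_eq {n : ℕ} (w : Fin n → ι) : theta g w = wmat g w 1 0 / wmat g w 1 1 := by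
  simp [theta, mob]

theorem theta_snoc (S : Sys g X Y l c) {n : ℕ} (w : Fin n → ι) (i : ι) :
    theta g (Fin.snoc w i : Fin (n+1) → ι) = mob (g i).transpose (theta g w) := by
  unfold theta
  rw [wmat_snoc, Matrix.transpose_mul,
    mob_mul (S.good i).transpose (S.wgood w).transpose le_rfl]

theorem theta_nonneg (S : Sys g X Y l c) {n : ℕ} (w : Fin n → ι) : 0 ≤ theta g w :=
  (S.wgood w).transpose.mob_nonneg le_rfl

theorem theta_le_one (S : Sys g X Y l c) {n : ℕ} (w : Fin n → ι) : theta g w ≤ 1 :=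
  (S.wgood w).transpose.mob_le_one le_rfl zero_le_one

theorem theta_close (S : Sys g X Y l c) {n : ℕ} (v w : Fin n → ι) :
    |theta g v - theta g w| ≤ 1 - l := by
  have h1 := S.l1
  cases n with
  | zero =>
    have : v = w := Subsingleton.elim _ _
    rw [this]; simpa using h1
  | succ n =>
    have key : ∀ u : Fin (n+1) → ι, l ≤ theta g u := by
      intro u
      rw [← Fin.snoc_init_self u, S.theta_snoc]
      exact S.low _ _ (S.theta_nonneg _) (S.theta_le_one _)
    have := key v
    have := key w
    have := S.theta_le_one v
    have := S.theta_le_one w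
    rw [abs_le]; constructor <;> linarith

theorem theta_same (S : Sys g X Y l c) {n : ℕ} (v w : Fin n → ι) (i : ι) :
    |theta g v - theta g w| / (X * Y) ^ 2 ≤
      |theta g (Fin.snoc v i : Fin (n+1) → ι) - theta g (Fin.snoc w i : Fin (n+1) → ι)| := by
  rw [S.theta_snoc, S.theta_snoc]
  have hg := (S.good i).transpose
  rw [mob_sub hg (S.theta_nonneg v) (S.theta_nonneg w), Matrix.det_transpose, S.det, one_mul, abs_div]
  have h1 := hg.den_pos (S.theta_nonneg v)
  have h2 := hg.den_pos (S.theta_nonneg w)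
  have h3 := (hg.den_le (S.theta_nonneg v) (S.theta_le_one v)).trans (S.hi i)
  have h4 := (hg.den_le (S.theta_nonneg w) (S.theta_le_one w)).trans (S.hi i)
  have hp := mul_pos h1 h2
  rw [abs_of_pos hp]
  apply div_le_div_of_nonneg_left (abs_nonneg _) hp
  rw [sq]
  exact mul_le_mul h3 h4 h2.le (h1.le.trans h3)

theorem theta_diff (S : Sys g X Y l c) {n : ℕ} (v w : Fin n → ι) {i j : ι} (h : i ≠ j) :
    c ≤ |theta g (Fin.snoc v i : Fin (n+1) → ι) - theta g (Fin.snoc w j : Fin (n+1) → ι)| := by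
  rw [S.theta_snoc, S.theta_snoc]
  exact S.sep _ _ _ _ h (S.theta_nonneg v) (S.theta_le_one v) (S.theta_nonneg w) (S.theta_le_one w)
    (S.theta_close v w)

theorem theta_inj (S : Sys g X Y l c) {n : ℕ} (v w : Fin n → ι) (h : v ≠ w) :
    0 < |theta g v - theta g w| := by
  induction n with
  | zero => exact absurd (Subsingleton.elim _ _) h
  | succ n ih =>
    revert h
    refine Fin.snocCases (fun v a => ?_) v
    refine Fin.snocCases (fun w b => ?_) w
    intro h
    by_cases hl : a = b
    · subst hl
      have hne : v ≠ w := by rintro rfl; exact h rfl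
      refine lt_of_lt_of_le (div_pos (ih _ _ hne) ?_) (S.theta_same v w a)
      have := S.Xpos
      have := S.Ypos
      positivity
    · exact lt_of_lt_of_le S.cpos (S.theta_diff v w hl)

/-- energy -/
noncomputable def en (g : ι → Mat2) {n : ℕ} (v w : Fin n → ι) : ℝ :=
  if v = w then 0 else 1 / √|theta g v - theta g w|

theorem en_nonneg {n : ℕ} (v w : Fin n → ι) : 0 ≤ en g v w := by
  unfold en; split_ifs <;> positivity

theorem en_same (S : Sys g X Y l c) {n : ℕ} (v w : Fin n → ι) (i : ι) :
    en g (Fin.snoc v i : Fin (n+1) → ι) (Fin.snoc w i) ≤ X * Y * en g v w := by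
  have hX := S.Xpos
  have hY := S.Ypos
  unfold en
  by_cases h : v = w
  · simp [h]
  · have h' : (Fin.snoc v i : Fin (n+1) → ι) ≠ Fin.snoc w i := by
      intro e; exact h (Fin.snoc_left_injective _ e)
    rw [if_neg h, if_neg h']
    have h1 := S.theta_same v w i
    have h0 := S.theta_inj v w h
    have h2 : √|theta g v - theta g w| / (X * Y) ≤ √|theta g (Fin.snoc v i : Fin (n+1) → ι) - theta g (Fin.snoc w i : Fin (n+1) → ι)| := by
      refine le_trans (le_of_eq ?_) (Real.sqrt_le_sqrt h1)
      rw [Real.sqrt_div' _ (by positivity), Real.sqrt_sq (by positivity)]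
    have h3 := Real.sqrt_pos.2 h0
    refine (one_div_le_one_div_of_le (by positivity) h2).trans (le_of_eq ?_)
    field_simp

theorem en_diff (S : Sys g X Y l c) {n : ℕ} (v w : Fin n → ι) {i j : ι} (h : i ≠ j) :
    en g (Fin.snoc v i : Fin (n+1) → ι) (Fin.snoc w j) ≤ 1 / √c := by
  have := S.cpos
  have h1 := S.theta_diff v w h
  unfold en
  split_ifs
  · positivity
  · exact one_div_le_one_div_of_le (Real.sqrt_pos.2 S.cpos) (Real.sqrt_le_sqrt h1)

theorem card_ge (S : Sys g X Y l c) : 2 * (X * Y) ≤ Fintype.card ι := by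
  refine le_trans ?_ S.card
  have h1 : (2:ℝ) ^ 9 ≤ Y ^ 9 := pow_le_pow_left₀ (by norm_num) S.hY 9
  have := mul_pos S.Xpos S.Ypos
  have e : X * Y ^ 10 = X * Y * Y ^ 9 := by ring
  rw [e]
  nlinarith

theorem energy (S : Sys g X Y l c) (n : ℕ) :
    ∑ v : Fin n → ι, ∑ w : Fin n → ι, en g v w ≤ 2 / √c * (Fintype.card ι : ℝ) ^ (2 * n) := by
  induction n with
  | zero =>
    have : ∀ v w : Fin 0 → ι, en g v w = 0 := by
      intro v w; simp [en, Subsingleton.elim v w]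
    simp only [this, Finset.sum_const_zero]
    positivity
  | succ n ih =>
    set M : ℝ := ((Fintype.card ι : ℕ) : ℝ) with hM
    have hX := S.Xpos
    have hY := S.Ypos
    have hc := Real.sqrt_pos.2 S.cpos
    have hMM := S.card_ge
    rw [sum_snoc]
    have h1 : ∀ i : ι, ∀ v : Fin n → ι, ∑ w : Fin (n+1) → ι, en g (Fin.snoc v i) w ≤
        X * Y * ∑ w : Fin n → ι, en g v w + M * (M ^ n * (1 / √c)) := by
      intro i v
      rw [sum_snoc]
      have : ∀ j : ι, ∑ w : Fin n → ι, en g (Fin.snoc v i : Fin (n+1) → ι) (Fin.snoc w j) ≤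
          (if i = j then X * Y * ∑ w : Fin n → ι, en g v w else 0) + M ^ n * (1 / √c) := by
        intro j
        split_ifs with h
        · subst h
          have : ∑ w : Fin n → ι, en g (Fin.snoc v i : Fin (n+1) → ι) (Fin.snoc w i) ≤
              X * Y * ∑ w : Fin n → ι, en g v w := by
            rw [Finset.mul_sum]
            exact Finset.sum_le_sum fun w _ => S.en_same v w i
          have : 0 ≤ M ^ n * (1 / √c) := by positivity
          linarith
        · rw [zero_add]
          refine (Finset.sum_le_sum fun w _ => S.en_diff v w h).trans (le_of_eq ?_)
          simp [hM]
      refine (Finset.sum_le_sum fun j _ => this j).trans (le_of_eq ?_)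
      rw [Finset.sum_add_distrib, Finset.sum_ite_eq]
      simp [hM]
    refine (Finset.sum_le_sum fun i _ => Finset.sum_le_sum fun v _ => h1 i v).trans ?_
    simp only [Finset.sum_add_distrib, ← Finset.mul_sum, Finset.sum_const, Finset.card_univ,
      nsmul_eq_mul, Fintype.card_pi, Finset.prod_const, Fintype.card_fin, Nat.cast_pow, ← hM]
    have hM0 : 0 < M := by nlinarith [mul_pos hX hY]
    have h2 : X * Y * (M * ∑ i : Fin n → ι, ∑ j : Fin n → ι, en g i j) ≤
        M * (M / 2 * (2 / √c * M ^ (2 * n))) := by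
      rw [mul_left_comm]
      apply mul_le_mul_of_nonneg_left _ hM0.le
      apply mul_le_mul (by linarith) ih _ (by positivity)
      exact Finset.sum_nonneg fun i _ => Finset.sum_nonneg fun j _ => en_nonneg i j
    have e1 : M * (M / 2 * (2 / √c * M ^ (2 * n))) = 1 / √c * M ^ (2 * (n+1)) := by ring
    have e2 : M * (M ^ n * (M ^ n * (M * (1 / √c)))) = 1 / √c * M ^ (2 * (n+1)) := by ring
    have e3 : 2 / √c * M ^ (2 * (n+1)) = 1 / √c * M ^ (2 * (n+1)) + 1 / √c * M ^ (2 * (n+1)) := by ring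
    rw [e3]
    rw [e1] at h2
    rw [e2]
    linarith

end Sys

end

section -- part C3

theorem vdc_half {a b y0 ρ lam K : ℝ} (hab : a ≤ b) (hρ : 0 < ρ) (hl : 0 < lam) (hK : 0 ≤ K)
    {Φ Φ1 Φ2 : ℝ → ℝ} (h1 : ∀ y ∈ Set.Icc a b, HasDerivAt Φ (Φ1 y) y)
    (h2 : ∀ y ∈ Set.Icc a b, HasDerivAt Φ1 (Φ2 y) y)
    (h2c : ContinuousOn Φ2 (Set.Icc a b))
    (hlow : ∀ y ∈ Set.Icc a b, lam * |y - y0| ≤ |Φ1 y|)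
    (hup : ∀ y ∈ Set.Icc a b, |Φ2 y| ≤ K * lam)
    (hside : ρ ≤ a - y0 ∨ ρ ≤ y0 - b) :
    ‖∫ y in a..b, Complex.exp (Complex.I * Φ y)‖ ≤ (2 + K) / (lam * ρ) := by
  have hne0 : ∀ y ∈ Set.Icc a b, ρ ≤ |y - y0| := by
    intro y hy
    rcases hside with h | h
    · exact le_trans (by linarith [hy.1]) (le_abs_self _)
    · exact le_trans (by linarith [hy.2]) (neg_le_abs _)
  have hne : ∀ y ∈ Set.Icc a b, y - y0 ≠ 0 := by
    intro y hy h
    have := hne0 y hy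
    rw [h, abs_zero] at this
    linarith
  have hΦρ : ∀ y ∈ Set.Icc a b, lam * ρ ≤ |Φ1 y| := fun y hy =>
    (mul_le_mul_of_nonneg_left (hne0 y hy) hl.le).trans (hlow y hy)
  have hΦ : ∀ y ∈ Set.Icc a b, Φ1 y ≠ 0 := by
    intro y hy h
    have := hΦρ y hy
    rw [h, abs_zero] at this
    have := mul_pos hl hρ
    linarith
  have hΦc : ∀ y ∈ Set.Icc a b, (Φ1 y : ℂ) ≠ 0 := fun y hy => by exact_mod_cast hΦ y hy
  have hu : Set.uIcc a b = Set.Icc a b := Set.uIcc_of_le hab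
  set E : ℝ → ℂ := fun y => Complex.exp (Complex.I * Φ y) with hE
  have hEn : ∀ y, ‖E y‖ = 1 := by
    intro y
    rw [hE]; simp only
    rw [mul_comm]; exact Complex.norm_exp_ofReal_mul_I _
  have dE : ∀ y ∈ Set.Icc a b, HasDerivAt E (E y * (Complex.I * Φ1 y)) y := by
    intro y hy
    exact ((h1 y hy).ofReal_comp.const_mul Complex.I).cexp
  have dU : ∀ y ∈ Set.Icc a b, HasDerivAt (fun y => (Complex.I * (Φ1 y : ℂ))⁻¹)
      (-(Complex.I * Φ2 y) / (Complex.I * (Φ1 y : ℂ)) ^ 2) y := by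
    intro y hy
    exact ((h2 y hy).ofReal_comp.const_mul Complex.I).inv (mul_ne_zero Complex.I_ne_zero (hΦc y hy))
  have c0 : ContinuousOn Φ (Set.Icc a b) := fun y hy => (h1 y hy).continuousAt.continuousWithinAt
  have c1 : ContinuousOn Φ1 (Set.Icc a b) := fun y hy => (h2 y hy).continuousAt.continuousWithinAt
  have cE : ContinuousOn E (Set.Icc a b) := fun y hy => (dE y hy).continuousAt.continuousWithinAt
  have c1' : ContinuousOn (fun y => (Φ1 y : ℂ)) (Set.Icc a b) :=
    Complex.continuous_ofReal.comp_continuousOn c1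
  have c2' : ContinuousOn (fun y => (Φ2 y : ℂ)) (Set.Icc a b) :=
    Complex.continuous_ofReal.comp_continuousOn h2c
  have cU' : ContinuousOn (fun y => -(Complex.I * Φ2 y) / (Complex.I * (Φ1 y : ℂ)) ^ 2) (Set.Icc a b) := by
    apply ContinuousOn.div (continuousOn_const.mul c2').neg ((continuousOn_const.mul c1').pow 2)
    intro y hy
    exact pow_ne_zero 2 (mul_ne_zero Complex.I_ne_zero (hΦc y hy))
  have ibp := intervalIntegral.integral_mul_deriv_eq_deriv_mul (a := a) (b := b)
    (u := fun y => (Complex.I * (Φ1 y : ℂ))⁻¹) (v := E)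
    (u' := fun y => -(Complex.I * Φ2 y) / (Complex.I * (Φ1 y : ℂ)) ^ 2)
    (v' := fun y => E y * (Complex.I * Φ1 y)) (by rwa [hu]) (by rwa [hu])
    (by apply ContinuousOn.intervalIntegrable; rwa [hu])
    (by apply ContinuousOn.intervalIntegrable; rw [hu]; exact cE.mul (continuousOn_const.mul c1'))
  have e1 : ∫ y in a..b, (Complex.I * (Φ1 y : ℂ))⁻¹ * (E y * (Complex.I * Φ1 y)) =
      ∫ y in a..b, E y := by
    apply intervalIntegral.integral_congr
    intro y hy
    rw [hu] at hy
    have := hΦc y hy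
    have := Complex.I_ne_zero
    simp only
    field_simp
  rw [e1] at ibp
  rw [ibp]
  have bd : ∀ y ∈ Set.Icc a b, ‖(Complex.I * (Φ1 y : ℂ))⁻¹ * E y‖ ≤ 1 / (lam * ρ) := by
    intro y hy
    rw [norm_mul, hEn, mul_one, norm_inv, norm_mul, Complex.norm_I, one_mul, Complex.norm_real,
      Real.norm_eq_abs, ← one_div]
    exact one_div_le_one_div_of_le (mul_pos hl hρ) (hΦρ y hy)
  have ci : ContinuousOn (fun y => K / lam * (1 / (y - y0) ^ 2)) (Set.Icc a b) := by
    apply continuousOn_const.mul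
    apply continuousOn_const.div (by fun_prop)
    intro y hy
    exact pow_ne_zero 2 (hne y hy)
  have bi : ‖∫ y in a..b, -(Complex.I * Φ2 y) / (Complex.I * (Φ1 y : ℂ)) ^ 2 * E y‖ ≤
      ∫ y in a..b, K / lam * (1 / (y - y0) ^ 2) := by
    apply intervalIntegral.norm_integral_le_of_norm_le hab
    · refine Eventually.of_forall fun y hy' => ?_
      have hy : y ∈ Set.Icc a b := ⟨hy'.1.le, hy'.2⟩
      rw [norm_mul, hEn, mul_one, norm_div, norm_neg, norm_pow, norm_mul, norm_mul, Complex.norm_I,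
        one_mul, one_mul, Complex.norm_real, Complex.norm_real, Real.norm_eq_abs, Real.norm_eq_abs]
      have hpos : 0 < |y - y0| := abs_pos.2 (hne y hy)
      calc |Φ2 y| / |Φ1 y| ^ 2 ≤ (K * lam) / (lam * |y - y0|) ^ 2 := by
            apply div_le_div₀ (by positivity) (hup y hy) (by positivity)
            exact pow_le_pow_left₀ (by positivity) (hlow y hy) 2
        _ = K / lam * (1 / (y - y0) ^ 2) := by
            rw [mul_pow, sq_abs]
            have := hne y hy
            field_simp
    · apply ContinuousOn.intervalIntegrable; rwa [hu]
  have ev : ∫ y in a..b, K / lam * (1 / (y - y0) ^ 2) =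
      K / lam * (-(b - y0)⁻¹) - K / lam * (-(a - y0)⁻¹) := by
    apply intervalIntegral.integral_eq_sub_of_hasDerivAt (f := fun y => K / lam * (-(y - y0)⁻¹))
    · intro y hy
      rw [hu] at hy
      have := (((hasDerivAt_id y).sub_const y0).inv (hne y hy)).neg.const_mul (K / lam)
      have e : K / lam * (1 / (y - y0) ^ 2) = K / lam * -(-1 / (id y - y0) ^ 2) := by
        simp [neg_div]
      rw [e]
      exact this
    · apply ContinuousOn.intervalIntegrable; rwa [hu]
  have ev2 : ∫ y in a..b, K / lam * (1 / (y - y0) ^ 2) ≤ K / (lam * ρ) := by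
    rw [ev]
    have : (a - y0)⁻¹ - (b - y0)⁻¹ ≤ ρ⁻¹ := by
      rcases hside with h | h
      · have i1 : (a - y0)⁻¹ ≤ ρ⁻¹ := inv_anti₀ hρ h
        have i2 : 0 < (b - y0)⁻¹ := inv_pos.2 (by linarith)
        linarith
      · have i1 : (y0 - b)⁻¹ ≤ ρ⁻¹ := inv_anti₀ hρ h
        have i2 : 0 < (y0 - a)⁻¹ := inv_pos.2 (by linarith)
        have i3 : (a - y0)⁻¹ = - (y0 - a)⁻¹ := by rw [← inv_neg]; congr 1; ring
        have i4 : (b - y0)⁻¹ = - (y0 - b)⁻¹ := by rw [← inv_neg]; congr 1; ring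
        linarith
    calc _ = K / lam * ((a - y0)⁻¹ - (b - y0)⁻¹) := by ring
      _ ≤ K / lam * ρ⁻¹ := mul_le_mul_of_nonneg_left this (by positivity)
      _ = K / (lam * ρ) := by rw [div_mul_eq_div_div, div_eq_mul_inv (K / lam)]
  have ha := bd a ⟨le_rfl, hab⟩
  have hb := bd b ⟨hab, le_rfl⟩
  refine (norm_sub_le _ _).trans ?_
  have := norm_sub_le ((Complex.I * (Φ1 b : ℂ))⁻¹ * E b) ((Complex.I * (Φ1 a : ℂ))⁻¹ * E a)
  have e : (2 + K) / (lam * ρ) = 1 / (lam * ρ) + 1 / (lam * ρ) + K / (lam * ρ) := by ring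
  rw [e]
  linarith

theorem vdc {y0 lam K : ℝ} (hy0 : 0 ≤ y0) (hy1 : y0 ≤ 1) (hl : 0 < lam) (hK : 2 ≤ K)
    {Φ Φ1 Φ2 : ℝ → ℝ} (h1 : ∀ y ∈ Set.Icc (0:ℝ) 1, HasDerivAt Φ (Φ1 y) y)
    (h2 : ∀ y ∈ Set.Icc (0:ℝ) 1, HasDerivAt Φ1 (Φ2 y) y)
    (h2c : ContinuousOn Φ2 (Set.Icc 0 1))
    (hlow : ∀ y ∈ Set.Icc (0:ℝ) 1, lam * |y - y0| ≤ |Φ1 y|)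
    (hup : ∀ y ∈ Set.Icc (0:ℝ) 1, |Φ2 y| ≤ K * lam) :
    ‖∫ y in (0:ℝ)..1, Complex.exp (Complex.I * Φ y)‖ ≤ 6 * √(K / lam) := by
  set ρ := √(K / lam) with hρd
  have hρ : 0 < ρ := Real.sqrt_pos.2 (by positivity)
  have hρ2 : ρ ^ 2 = K / lam := Real.sq_sqrt (by positivity)
  have hEn : ∀ y, ‖Complex.exp (Complex.I * Φ y)‖ = 1 := by
    intro y
    rw [mul_comm]; exact Complex.norm_exp_ofReal_mul_I _
  have c0 : ContinuousOn (fun y => Complex.exp (Complex.I * Φ y)) (Set.Icc 0 1) := fun y hy =>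
    ((h1 y hy).ofReal_comp.const_mul Complex.I).cexp.continuousAt.continuousWithinAt
  have hii : ∀ a b, a ∈ Set.Icc (0:ℝ) 1 → b ∈ Set.Icc (0:ℝ) 1 →
      IntervalIntegrable (fun y => Complex.exp (Complex.I * Φ y)) volume a b := by
    intro a b ha hb
    apply ContinuousOn.intervalIntegrable
    exact c0.mono (Set.uIcc_subset_Icc ha hb)
  have half : ∀ a b, 0 ≤ a → a ≤ b → b ≤ 1 → (ρ ≤ a - y0 ∨ ρ ≤ y0 - b) →
      ‖∫ y in a..b, Complex.exp (Complex.I * Φ y)‖ ≤ 2 * ρ := by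
    intro a b ha hab hb hs
    have sub : Set.Icc a b ⊆ Set.Icc 0 1 := Set.Icc_subset_Icc ha hb
    have := vdc_half hab hρ hl (by linarith : (0:ℝ) ≤ K) (fun y hy => h1 y (sub hy))
      (fun y hy => h2 y (sub hy)) (h2c.mono sub) (fun y hy => hlow y (sub hy))
      (fun y hy => hup y (sub hy)) hs
    refine this.trans ?_
    rw [div_le_iff₀ (by positivity)]
    have : 2 * ρ * (lam * ρ) = 2 * K := by
      have : 2 * ρ * (lam * ρ) = 2 * lam * ρ ^ 2 := by ring
      rw [this, hρ2]; field_simp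
    linarith
  set a := max 0 (y0 - ρ) with ha
  set b := min 1 (y0 + ρ) with hb
  have ha0 : 0 ≤ a := le_max_left _ _
  have hb1 : b ≤ 1 := min_le_left _ _
  have hay : a ≤ y0 := max_le hy0 (by linarith)
  have hyb : y0 ≤ b := le_min hy1 (by linarith)
  have I1 : ‖∫ y in (0:ℝ)..a, Complex.exp (Complex.I * Φ y)‖ ≤ 2 * ρ := by
    rcases max_choice 0 (y0 - ρ) with h | h
    · rw [ha, h]; simp; positivity
    · apply half 0 a le_rfl ha0 (by linarith)
      right; rw [ha, h]; linarith
  have I3 : ‖∫ y in b..1, Complex.exp (Complex.I * Φ y)‖ ≤ 2 * ρ := by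
    rcases min_choice 1 (y0 + ρ) with h | h
    · rw [hb, h]; simp; positivity
    · apply half b 1 (by linarith) hb1 le_rfl
      left; rw [hb, h]; linarith
  have I2 : ‖∫ y in a..b, Complex.exp (Complex.I * Φ y)‖ ≤ 2 * ρ := by
    have := intervalIntegral.norm_integral_le_of_norm_le_const (a := a) (b := b) (C := 1)
      (f := fun y => Complex.exp (Complex.I * Φ y)) (fun y _ => (hEn y).le)
    refine this.trans ?_
    rw [one_mul, abs_of_nonneg (by linarith)]
    have : y0 - ρ ≤ a := le_max_right _ _
    have : b ≤ y0 + ρ := min_le_right _ _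
    linarith
  have m0 : (0:ℝ) ∈ Set.Icc (0:ℝ) 1 := by simp
  have m1 : (1:ℝ) ∈ Set.Icc (0:ℝ) 1 := by simp
  have ma : a ∈ Set.Icc (0:ℝ) 1 := ⟨ha0, by linarith⟩
  have mb : b ∈ Set.Icc (0:ℝ) 1 := ⟨by linarith, hb1⟩
  rw [← intervalIntegral.integral_add_adjacent_intervals (hii 0 a m0 ma) (hii a 1 ma m1),
    ← intervalIntegral.integral_add_adjacent_intervals (hii a b ma mb) (hii b 1 mb m1)]
  refine (norm_add_le _ _).trans ?_
  have := norm_add_le (∫ y in a..b, Complex.exp (Complex.I * Φ y)) (∫ y in b..1, Complex.exp (Complex.I * Φ y))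
  linarith

end

section -- part C4

theorem linear_root (α β : ℝ) : ∃ y0, 0 ≤ y0 ∧ y0 ≤ 1 ∧ ∀ y ∈ Set.Icc (0:ℝ) 1,
    (|α| + |β|) / 2 * |y - y0| ≤ |α + β * y| := by
  have key : ∀ α β : ℝ, 0 ≤ α → ∃ y0, 0 ≤ y0 ∧ y0 ≤ 1 ∧ ∀ y ∈ Set.Icc (0:ℝ) 1,
      (|α| + |β|) / 2 * |y - y0| ≤ |α + β * y| := by
    intro α β hα
    rcases le_or_gt 0 β with hβ | hβ
    · refine ⟨0, le_rfl, zero_le_one, fun y hy => ?_⟩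
      rw [abs_of_nonneg hα, abs_of_nonneg hβ, sub_zero, abs_of_nonneg hy.1,
        abs_of_nonneg (by have := mul_nonneg hβ hy.1; linarith)]
      nlinarith [hy.1, hy.2, mul_nonneg hβ hy.1, mul_nonneg hα (sub_nonneg.2 hy.2), mul_nonneg hα hy.1]
    · rw [abs_of_nonneg hα, abs_of_neg hβ]
      rcases le_or_gt (-β) α with h | h
      · refine ⟨1, zero_le_one, le_rfl, fun y hy => ?_⟩
        have : 0 ≤ α + β * y := by nlinarith [hy.1, hy.2]
        rw [abs_of_nonneg this, abs_sub_comm, abs_of_nonneg (sub_nonneg.2 hy.2)]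
        nlinarith [hy.1, hy.2, mul_nonneg (sub_nonneg.2 h) hy.1, mul_nonneg (sub_nonneg.2 h) (sub_nonneg.2 hy.2)]
      · refine ⟨α / (-β), div_nonneg hα (by linarith), ?_, fun y hy => ?_⟩
        · rw [div_le_one (by linarith)]; exact h.le
        · have e : α + β * y = β * (y - α / (-β)) := by
            have : β ≠ 0 := hβ.ne
            field_simp; ring
          rw [e, abs_mul, abs_of_neg hβ]
          apply mul_le_mul_of_nonneg_right _ (abs_nonneg _)
          linarith
  rcases le_total 0 α with h | h
  · exact key α β h
  · obtain ⟨y0, a, b, hh⟩ := key (-α) (-β) (by linarith)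
    refine ⟨y0, a, b, fun y hy => ?_⟩
    have := hh y hy
    rw [abs_neg, abs_neg] at this
    rwa [show -α + -β * y = -(α + β * y) by ring, abs_neg] at this

theorem pair_bound {G H : Mat2} (hG : Good G) (hH : Good H) (dG : G.det = 1) (dH : H.det = 1)
    {r R t : ℝ} (hr : 0 < r) (hGr : r ≤ G 1 1) (hHr : r ≤ H 1 1) (hGR : G 1 1 ≤ R) (hHR : H 1 1 ≤ R)
    (ht : 0 < t) {δ : ℝ} (hδ : 0 < δ) (hδe : δ = |G 1 0 / G 1 1 - H 1 0 / H 1 1|) :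
    ‖∫ y in (0:ℝ)..1, Complex.exp (Complex.I * ((t * (mob G y - mob H y) : ℝ) : ℂ))‖ ≤
      608 * √(R ^ 9 / (r ^ 7 * t)) * (1 / √δ) := by
  have hR : 0 < R := by linarith
  have hrR : r ≤ R := by linarith
  set q := G 1 1 with hq
  set q' := G 1 0 with hq'
  set Q := H 1 1 with hQ
  set Q' := H 1 0 with hQ'
  have hq0 : 0 < q := by linarith
  have hQ0 : 0 < Q := by linarith
  set D := |Q - q| + |Q' - q'| with hD
  have hDδ : r * δ ≤ D := by
    have e : q' / q - Q' / Q = (q' * (Q - q) - q * (Q' - q')) / (q * Q) := by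
      field_simp; ring
    rw [hδe, e, abs_div, abs_of_pos (mul_pos hq0 hQ0)]
    have h1 : |q' * (Q - q) - q * (Q' - q')| ≤ q * D := by
      refine (abs_sub _ _).trans ?_
      rw [abs_mul, abs_mul, abs_of_nonneg hG.n10, abs_of_pos hq0, hD, mul_add]
      have := mul_le_mul_of_nonneg_right hG.h10 (abs_nonneg (Q - q))
      linarith
    calc r * (|q' * (Q - q) - q * (Q' - q')| / (q * Q)) ≤ Q * (q * D / (q * Q)) := by
          apply mul_le_mul hHr _ (by positivity) hQ0.le
          exact div_le_div_of_nonneg_right h1 (by positivity)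
      _ = D := by field_simp
  have hD0 : 0 < D := lt_of_lt_of_le (mul_pos hr hδ) hDδ
  obtain ⟨y0, hy0, hy1, hroot⟩ := linear_root (Q - q) (Q' - q')
  set lam := t * D / (16 * R ^ 3) with hlam
  set K := 640 * R ^ 6 / r ^ 6 with hK
  have hl : 0 < lam := by positivity
  have hK2 : 2 ≤ K := by
    rw [hK, le_div_iff₀ (by positivity)]
    have := pow_le_pow_left₀ hr.le hrR 6
    nlinarith [pow_pos hR 6]
  have du : ∀ (u v : ℝ) (y : ℝ), HasDerivAt (fun y => u * y + v) u y := by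
    intro u v y
    simpa using ((hasDerivAt_id y).const_mul u).add_const v
  have dd : ∀ (u v : ℝ) (y : ℝ), u * y + v ≠ 0 →
      HasDerivAt (fun y => 1 / (u * y + v) ^ 2) (-(2 * u) / (u * y + v) ^ 3) y := by
    intro u v y h
    have := ((du u v y).pow 2).inv (pow_ne_zero 2 h)
    simp only [one_div]
    refine HasDerivAt.congr_deriv this ?_
    simp only [Pi.pow_apply]
    field_simp
    norm_num
    ring
  have uG : ∀ y ∈ Set.Icc (0:ℝ) 1, r ≤ q' * y + q ∧ q' * y + q ≤ 2 * R := fun y hy =>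
    ⟨hGr.trans (hG.den_ge hy.1), (hG.den_le hy.1 hy.2).trans (by linarith)⟩
  have uH : ∀ y ∈ Set.Icc (0:ℝ) 1, r ≤ Q' * y + Q ∧ Q' * y + Q ≤ 2 * R := fun y hy =>
    ⟨hHr.trans (hH.den_ge hy.1), (hH.den_le hy.1 hy.2).trans (by linarith)⟩
  have main := vdc hy0 hy1 hl hK2 (Φ := fun y => t * (mob G y - mob H y))
    (Φ1 := fun y => t * (1 / (q' * y + q) ^ 2 - 1 / (Q' * y + Q) ^ 2))
    (Φ2 := fun y => t * (-(2 * q') / (q' * y + q) ^ 3 - -(2 * Q') / (Q' * y + Q) ^ 3))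
    (by
      intro y hy
      have e1 := mob_hasDerivAt hG hy.1
      have e2 := mob_hasDerivAt hH hy.1
      rw [dG] at e1
      rw [dH] at e2
      exact (e1.sub e2).const_mul t)
    (by
      intro y hy
      have := (uG y hy).1
      have := (uH y hy).1
      exact ((dd _ _ _ (by linarith)).sub (dd _ _ _ (by linarith))).const_mul t)
    (by
      have i1 : ∀ y ∈ Set.Icc (0:ℝ) 1, (q' * y + q) ^ 3 ≠ 0 := by
        intro y hy
        have := (uG y hy).1
        exact pow_ne_zero _ (by linarith)
      have i2 : ∀ y ∈ Set.Icc (0:ℝ) 1, (Q' * y + Q) ^ 3 ≠ 0 := by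
        intro y hy
        have := (uH y hy).1
        exact pow_ne_zero _ (by linarith)
      apply continuousOn_const.mul
      apply ContinuousOn.sub
      · exact ContinuousOn.div (by fun_prop) (by fun_prop) i1
      · exact ContinuousOn.div (by fun_prop) (by fun_prop) i2)
    (by
      intro y hy
      obtain ⟨a1, a2⟩ := uG y hy
      obtain ⟨b1, b2⟩ := uH y hy
      have hro := hroot y hy
      rw [show Q - q + (Q' - q') * y = (Q' * y + Q) - (q' * y + q) by ring] at hro
      generalize q' * y + q = u at *
      generalize Q' * y + Q = v at *
      have hu : 0 < u := by linarith
      have hv : 0 < v := by linarith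
      have e : t * (1 / u ^ 2 - 1 / v ^ 2) = t * (v - u) * ((v + u) / (u * v) ^ 2) := by
        field_simp; ring
      rw [e, abs_mul, abs_mul, abs_of_pos ht, abs_of_pos (by positivity : 0 < (v + u) / (u * v) ^ 2)]
      have k : 1 / (8 * R ^ 3) ≤ (v + u) / (u * v) ^ 2 := by
        rw [div_le_div_iff₀ (by positivity) (by positivity), one_mul]
        have m : ∀ a b : ℝ, 0 < a → a ≤ b → b ≤ 2 * R → (a * b) ^ 2 ≤ (b + a) * (8 * R ^ 3) := by
          intro a b ha hab hb
          have hb0 : 0 < b := by linarith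
          calc (a * b) ^ 2 ≤ (b * b) ^ 2 := by gcongr
            _ = b * b ^ 3 := by ring
            _ ≤ (b + a) * (2 * R) ^ 3 := by
              apply mul_le_mul (by linarith) (by gcongr) (by positivity) (by linarith)
            _ = _ := by ring
        rcases le_total u v with h | h
        · exact m u v hu h b2
        · have := m v u hv h a2
          rw [mul_comm u v, add_comm v u]; exact this
      calc lam * |y - y0| = t * (D / 2 * |y - y0|) * (1 / (8 * R ^ 3)) := by
            rw [hlam]; field_simp; ring
        _ ≤ t * |v - u| * ((v + u) / (u * v) ^ 2) := by
            apply mul_le_mul _ k (by positivity) (by positivity)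
            exact mul_le_mul_of_nonneg_left hro ht.le)
    (by
      intro y hy
      obtain ⟨a1, a2⟩ := uG y hy
      obtain ⟨b1, b2⟩ := uH y hy
      have huv : |(Q' * y + Q) - (q' * y + q)| ≤ D := by
        rw [show (Q' * y + Q) - (q' * y + q) = (Q - q) + (Q' - q') * y by ring]
        refine (abs_add_le _ _).trans ?_
        rw [abs_mul, abs_of_nonneg hy.1, hD]
        have := mul_le_mul_of_nonneg_left hy.2 (abs_nonneg (Q' - q'))
        linarith
      have hq'R : |q'| ≤ R := by
        rw [abs_of_nonneg hG.n10]; exact hG.h10.trans hGR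
      have hDq : |q' - Q'| ≤ D := by
        rw [abs_sub_comm, hD]; linarith [abs_nonneg (Q - q)]
      generalize q' * y + q = u at *
      generalize Q' * y + Q = v at *
      have hu : 0 < u := by linarith
      have hv : 0 < v := by linarith
      have e : t * (-(2 * q') / u ^ 3 - -(2 * Q') / v ^ 3) =
          t * (2 / (u * v) ^ 3 * (-(q' * ((v - u) * (v ^ 2 + v * u + u ^ 2))) - (q' - Q') * u ^ 3)) := by
        field_simp; ring
      rw [e, abs_mul, abs_mul, abs_of_pos ht, abs_of_pos (by positivity : 0 < 2 / (u * v) ^ 3)]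
      have k1 : v ^ 2 + v * u + u ^ 2 ≤ 12 * R ^ 2 := by nlinarith
      have k2 : u ^ 3 ≤ 8 * R ^ 3 := by
        have := pow_le_pow_left₀ hu.le a2 3
        linarith [this, (by ring : (2 * R) ^ 3 = 8 * R ^ 3)]
      have k : |-(q' * ((v - u) * (v ^ 2 + v * u + u ^ 2))) - (q' - Q') * u ^ 3| ≤ 20 * D * R ^ 3 := by
        refine (abs_sub _ _).trans ?_
        rw [abs_neg, abs_mul, abs_mul, abs_mul, abs_of_pos (by positivity : 0 < v ^ 2 + v * u + u ^ 2),
          abs_of_pos (by positivity : 0 < u ^ 3)]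
        have l1 : |q'| * (|v - u| * (v ^ 2 + v * u + u ^ 2)) ≤ R * (D * (12 * R ^ 2)) := by
          gcongr
        have l2 : |q' - Q'| * u ^ 3 ≤ D * (8 * R ^ 3) := by gcongr
        refine (add_le_add l1 l2).trans (le_of_eq ?_)
        ring
      have k3 : 2 / (u * v) ^ 3 ≤ 2 / (r * r) ^ 3 := by gcongr
      calc t * (2 / (u * v) ^ 3 * |-(q' * ((v - u) * (v ^ 2 + v * u + u ^ 2))) - (q' - Q') * u ^ 3|)
          ≤ t * (2 / (r * r) ^ 3 * (20 * D * R ^ 3)) := by gcongr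
        _ = K * lam := by
          rw [hK, hlam]; field_simp; ring)
  refine main.trans ?_
  have e1 : K / lam ≤ (10240 : ℝ) * (R ^ 9 / (r ^ 7 * t)) * (1 / δ) := by
    have : K / lam = 10240 * R ^ 9 / (r ^ 6 * t * D) := by
      rw [hK, hlam]; field_simp; ring
    rw [this]
    calc 10240 * R ^ 9 / (r ^ 6 * t * D) ≤ 10240 * R ^ 9 / (r ^ 6 * t * (r * δ)) := by gcongr
      _ = _ := by field_simp
  have e2 := Real.sqrt_le_sqrt e1
  rw [Real.sqrt_mul (by positivity), Real.sqrt_mul (by positivity), Real.sqrt_div (by positivity) δ,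
    Real.sqrt_one] at e2
  have e3 : √(10240:ℝ) ≤ 608 / 6 := by
    apply Real.sqrt_le_iff.2
    constructor <;> norm_num
  calc 6 * √(K / lam) ≤ 6 * (√10240 * √(R ^ 9 / (r ^ 7 * t)) * (1 / √δ)) := by gcongr
    _ ≤ 6 * (608 / 6 * √(R ^ 9 / (r ^ 7 * t)) * (1 / √δ)) := by gcongr
    _ = _ := by ring

end

section -- part C5

/-- self-similar probability measure -/
structure SelfSim {ι : Type*} [Fintype ι] (g : ι → Mat2) (μ : Measure ℝ) : Prop where
  prob : IsProbabilityMeasure μ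
  supp : ∀ᵐ x ∂μ, x ∈ Set.Ioo (0:ℝ) 1
  inv : μ = ((Fintype.card ι : ℕ) : ℝ≥0∞)⁻¹ • ∑ i, μ.map (mob (g i))

theorem mob_measurable (g : Mat2) : Measurable (mob g) := by
  unfold mob; fun_prop

theorem mob_strict {g : Mat2} (h : Good g) (hd : g.det = 1) {y z : ℝ} (hy : 0 ≤ y) (hyz : y < z) :
    mob g y < mob g z := by
  have hz : 0 ≤ z := by linarith
  have := mob_sub h hz hy
  rw [hd, one_mul] at this
  have h2 : 0 < (z - y) / ((g 1 0 * z + g 1 1) * (g 1 0 * y + g 1 1)) :=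
    div_pos (by linarith) (mul_pos (h.den_pos hz) (h.den_pos hy))
  linarith

theorem mob_mem {g : Mat2} (h : Good g) (hd : g.det = 1) {y : ℝ} (hy : y ∈ Set.Ioo (0:ℝ) 1) :
    mob g y ∈ Set.Ioo (0:ℝ) 1 := by
  have h1 := mob_strict h hd le_rfl hy.1
  have h2 := mob_strict h hd hy.1.le hy.2
  have h3 := h.mob_nonneg (le_refl (0:ℝ))
  have h4 := h.mob_le_one zero_le_one le_rfl
  exact ⟨by linarith, by linarith⟩

theorem mob_surj {g : Mat2} (h : Good g) {y : ℝ} (hy : y ∈ Set.Ioo (mob g 0) (mob g 1)) :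
    ∃ z ∈ Set.Ioo (0:ℝ) 1, mob g z = y := by
  have : ContinuousOn (mob g) (Set.Icc 0 1) := fun z hz =>
    (mob_hasDerivAt h hz.1).continuousAt.continuousWithinAt
  obtain ⟨z, hz, e⟩ := intermediate_value_Ioo zero_le_one this hy
  exact ⟨z, hz, e⟩

theorem expI_lip (a b : ℝ) : ‖Complex.exp (Complex.I * (a : ℂ)) - Complex.exp (Complex.I * (b : ℂ))‖ ≤ |a - b| := by
  have e : Complex.exp (Complex.I * (a : ℂ)) - Complex.exp (Complex.I * (b : ℂ)) =
      Complex.exp (Complex.I * (b : ℂ)) * (Complex.exp (Complex.I * ((a - b : ℝ) : ℂ)) - 1) := by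
    rw [mul_sub, ← Complex.exp_add, mul_one]
    congr 2
    push_cast; ring
  rw [e, norm_mul, mul_comm Complex.I (b : ℂ), Complex.norm_exp_ofReal_mul_I, one_mul]
  have := Real.norm_exp_I_mul_ofReal_sub_one_le (x := a - b)
  simpa using this

namespace Sys
variable {ι : Type*} [Fintype ι] {g : ι → Mat2} {X Y l c : ℝ}

theorem Mpos (S : Sys g X Y l c) : (0:ℝ) < Fintype.card ι := by
  have := S.card_ge
  have := mul_pos S.Xpos S.Ypos
  linarith

theorem wdisj (S : Sys g X Y l c) {n : ℕ} (v w : Fin n → ι) {y z : ℝ} (hy : y ∈ Set.Ioo (0:ℝ) 1)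
    (hz : z ∈ Set.Ioo (0:ℝ) 1) (h : mob (wmat g v) y = mob (wmat g w) z) : v = w := by
  induction n with
  | zero => exact Subsingleton.elim _ _
  | succ n ih =>
    have ev := Fin.cons_self_tail v
    have ew := Fin.cons_self_tail w
    rw [← ev, ← ew, wmat_cons, wmat_cons, mob_mul (S.good _) (S.wgood _) hy.1.le,
      mob_mul (S.good _) (S.wgood _) hz.1.le] at h
    have my := mob_mem (S.wgood (Fin.tail v)) (S.wdet _) hy
    have mz := mob_mem (S.wgood (Fin.tail w)) (S.wdet _) hz
    have e0 : v 0 = w 0 := by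
      by_contra hne
      exact S.disj _ _ _ _ hne my.1 my.2 mz.1 mz.2 h
    rw [e0] at h
    have e1 : mob (wmat g (Fin.tail v)) y = mob (wmat g (Fin.tail w)) z := by
      rcases lt_trichotomy (mob (wmat g (Fin.tail v)) y) (mob (wmat g (Fin.tail w)) z) with h' | h' | h'
      · have := mob_strict (S.good (w 0)) (S.det _) my.1.le h'
        linarith
      · exact h'
      · have := mob_strict (S.good (w 0)) (S.det _) mz.1.le h'
        linarith
    have := ih _ _ e1
    rw [← ev, ← ew, e0, this]

/-- exponential average -/
noncomputable def Fav (g : ι → Mat2) (n : ℕ) (t : ℝ) (y : ℝ) : ℂ :=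
  ((Fintype.card ι : ℂ) ^ n)⁻¹ * ∑ w : Fin n → ι, Complex.exp (Complex.I * ((t * mob (wmat g w) y : ℝ) : ℂ))

theorem Fav_cont (S : Sys g X Y l c) (n : ℕ) (t : ℝ) : ContinuousOn (Fav g n t) (Set.Icc 0 1) := by
  unfold Fav
  apply continuousOn_const.mul
  apply continuousOn_finsetSum
  intro w _
  have : ContinuousOn (mob (wmat g w)) (Set.Icc 0 1) := fun z hz =>
    (mob_hasDerivAt (S.wgood w) hz.1).continuousAt.continuousWithinAt
  apply Complex.continuous_exp.comp_continuousOn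
  apply continuousOn_const.mul
  apply Complex.continuous_ofReal.comp_continuousOn
  exact continuousOn_const.mul this

theorem Fav_meas (n : ℕ) (t : ℝ) : Measurable (Fav g n t) := by
  unfold Fav
  have : ∀ w : Fin n → ι, Measurable (mob (wmat g w)) := fun w => mob_measurable _
  fun_prop

theorem Fav_bdd (S : Sys g X Y l c) (n : ℕ) (t : ℝ) (y : ℝ) : ‖Fav g n t y‖ ≤ 1 := by
  unfold Fav
  have hM := S.Mpos
  rw [norm_mul, norm_inv, norm_pow, Complex.norm_natCast]
  rw [inv_mul_le_iff₀ (by positivity), mul_one]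
  refine (norm_sum_le _ _).trans ?_
  have : ∀ w : Fin n → ι, ‖Complex.exp (Complex.I * ((t * mob (wmat g w) y : ℝ) : ℂ))‖ = 1 := by
    intro w
    rw [mul_comm]; exact Complex.norm_exp_ofReal_mul_I _
  simp only [this]
  simp

theorem Fav_lip (S : Sys g X Y l c) (n : ℕ) (t : ℝ) {y z : ℝ} (hy : 0 ≤ y) (hz : 0 ≤ z) :
    ‖Fav g n t y - Fav g n t z‖ ≤ |t| * (|y - z| / X ^ (2 * n)) := by
  unfold Fav
  have hM := S.Mpos
  have hX := S.Xpos
  rw [← mul_sub, ← Finset.sum_sub_distrib, norm_mul, norm_inv, norm_pow, Complex.norm_natCast]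
  rw [inv_mul_le_iff₀ (by positivity)]
  refine (norm_sum_le _ _).trans ?_
  refine (Finset.sum_le_sum (g := fun _ => |t| * (|y - z| / X ^ (2 * n))) fun w _ => ?_).trans (le_of_eq ?_)
  · refine (expI_lip _ _).trans ?_
    rw [← mul_sub, abs_mul]
    apply mul_le_mul_of_nonneg_left _ (abs_nonneg _)
    have h1 := (S.wlo w).trans ((S.wgood w).den_ge hy)
    have h2 := (S.wlo w).trans ((S.wgood w).den_ge hz)
    have h3 := mul_pos ((S.wgood w).den_pos hy) ((S.wgood w).den_pos hz)
    rw [mob_sub (S.wgood w) hy hz, S.wdet, one_mul, abs_div, abs_of_pos h3]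
    apply div_le_div_of_nonneg_left (abs_nonneg _) (by positivity)
    rw [two_mul, pow_add]
    exact mul_le_mul h1 h2 (by positivity) ((S.wgood w).den_pos hy).le
  · simp

theorem m2_bound (S : Sys g X Y l c) (n : ℕ) {t : ℝ} (ht : 0 < t) :
    ∫ y in (0:ℝ)..1, ‖Fav g n t y‖ ^ 2 ≤ ((Fintype.card ι : ℝ) ^ n)⁻¹ +
      608 * √(((X * Y) ^ n) ^ 9 / ((X ^ n) ^ 7 * t)) * (2 / √c) := by
  set M : ℝ := ((Fintype.card ι : ℕ) : ℝ) with hM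
  have hM0 : 0 < M := S.Mpos
  have hX := S.Xpos
  have hY := S.Ypos
  set B := 608 * √(((X * Y) ^ n) ^ 9 / ((X ^ n) ^ 7 * t)) with hB
  have hB0 : 0 ≤ B := by positivity
  have ptw : ∀ y, ((‖Fav g n t y‖ ^ 2 : ℝ) : ℂ) = ((M : ℂ) ^ (2 * n))⁻¹ *
      ∑ v : Fin n → ι, ∑ w : Fin n → ι,
        Complex.exp (Complex.I * ((t * (mob (wmat g v) y - mob (wmat g w) y) : ℝ) : ℂ)) := by
    intro y
    have h1 : ((‖Fav g n t y‖ ^ 2 : ℝ) : ℂ) = Fav g n t y * (starRingEnd ℂ) (Fav g n t y) := by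
      rw [Complex.mul_conj, Complex.normSq_eq_norm_sq]
    rw [h1]
    unfold Fav
    rw [map_mul, map_sum, map_inv₀, map_pow, Complex.conj_natCast]
    rw [mul_mul_mul_comm, Finset.sum_mul_sum]
    congr 1
    · rw [hM, two_mul, pow_add, mul_inv]; simp
    · apply Finset.sum_congr rfl; intro v _
      apply Finset.sum_congr rfl; intro w _
      rw [← Complex.exp_conj, map_mul, Complex.conj_I, Complex.conj_ofReal, ← Complex.exp_add]
      congr 1
      push_cast; ring
  have hIntg : ∀ v w : Fin n → ι, IntervalIntegrable (fun y =>
      Complex.exp (Complex.I * ((t * (mob (wmat g v) y - mob (wmat g w) y) : ℝ) : ℂ))) volume 0 1 := by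
    intro v w
    apply ContinuousOn.intervalIntegrable
    rw [Set.uIcc_of_le zero_le_one]
    have : ∀ v : Fin n → ι, ContinuousOn (mob (wmat g v)) (Set.Icc 0 1) := fun v z hz =>
      (mob_hasDerivAt (S.wgood v) hz.1).continuousAt.continuousWithinAt
    apply Complex.continuous_exp.comp_continuousOn
    apply continuousOn_const.mul
    apply Complex.continuous_ofReal.comp_continuousOn
    exact continuousOn_const.mul ((this v).sub (this w))
  have e1 : ((∫ y in (0:ℝ)..1, ‖Fav g n t y‖ ^ 2 : ℝ) : ℂ) = ((M : ℂ) ^ (2 * n))⁻¹ *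
      ∑ v : Fin n → ι, ∑ w : Fin n → ι, ∫ y in (0:ℝ)..1,
        Complex.exp (Complex.I * ((t * (mob (wmat g v) y - mob (wmat g w) y) : ℝ) : ℂ)) := by
    rw [← intervalIntegral.integral_ofReal]
    simp only [ptw]
    rw [intervalIntegral.integral_const_mul, intervalIntegral.integral_finsetSum]
    · congr 1
      apply Finset.sum_congr rfl; intro v _
      rw [intervalIntegral.integral_finsetSum]
      intro w _; exact hIntg v w
    · intro v _
      have h5 := IntervalIntegrable.sum Finset.univ (fun w _ => hIntg v w)
      rw [Finset.sum_fn] at h5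
      exact h5
  have bd : ∀ v w : Fin n → ι, ‖∫ y in (0:ℝ)..1,
        Complex.exp (Complex.I * ((t * (mob (wmat g v) y - mob (wmat g w) y) : ℝ) : ℂ))‖ ≤
        (if v = w then 1 else 0) + B * en g v w := by
    intro v w
    unfold en
    by_cases h : v = w
    · subst h; simp
    · rw [if_neg h, if_neg h, zero_add]
      exact pair_bound (S.wgood v) (S.wgood w) (S.wdet v) (S.wdet w) (pow_pos hX n)
        (S.wlo v) (S.wlo w) (S.whi v) (S.whi w) ht (S.theta_inj v w h)
        (by rw [theta_eq, theta_eq])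
  have nn : 0 ≤ ∫ y in (0:ℝ)..1, ‖Fav g n t y‖ ^ 2 :=
    intervalIntegral.integral_nonneg zero_le_one (fun y _ => by positivity)
  have e2 : ∫ y in (0:ℝ)..1, ‖Fav g n t y‖ ^ 2 = ‖((∫ y in (0:ℝ)..1, ‖Fav g n t y‖ ^ 2 : ℝ) : ℂ)‖ := by
    rw [Complex.norm_real, Real.norm_of_nonneg nn]
  rw [e2, e1, norm_mul, norm_inv, norm_pow, Complex.norm_real, Real.norm_of_nonneg hM0.le,
    inv_mul_le_iff₀ (by positivity)]
  have e3 : ‖∑ v : Fin n → ι, ∑ w : Fin n → ι, ∫ y in (0:ℝ)..1,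
        Complex.exp (Complex.I * ((t * (mob (wmat g v) y - mob (wmat g w) y) : ℝ) : ℂ))‖ ≤
      ∑ v : Fin n → ι, ∑ w : Fin n → ι, ((if v = w then 1 else 0) + B * en g v w) :=
    (norm_sum_le _ _).trans (Finset.sum_le_sum fun v _ => (norm_sum_le _ _).trans
      (Finset.sum_le_sum fun w _ => bd v w))
  refine e3.trans ?_
  simp only [Finset.sum_add_distrib, ← Finset.mul_sum, Finset.sum_ite_eq, Finset.mem_univ, if_true]
  have e4 : ∑ v : Fin n → ι, (1:ℝ) = M ^ n := by simp [hM]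
  rw [e4]
  have := mul_le_mul_of_nonneg_left (S.energy n) hB0
  have e5 : M ^ (2 * n) * ((M ^ n)⁻¹ + B * (2 / √c)) = M ^ n + B * (2 / √c * M ^ (2 * n)) := by
    rw [two_mul, pow_add]; field_simp
  rw [e5]
  linarith

theorem inv_integral (S : Sys g X Y l c) {μ : Measure ℝ} (hμ : SelfSim g μ) (n : ℕ) (φ : ℝ → ℂ)
    (hφ : Measurable φ) (hb : ∀ x, ‖φ x‖ ≤ 1) :
    ∫ x, φ x ∂μ = ((Fintype.card ι : ℂ) ^ n)⁻¹ * ∑ w : Fin n → ι, ∫ y, φ (mob (wmat g w) y) ∂μ := by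
  have := hμ.prob
  have hbi : ∀ ψ : ℝ → ℂ, Measurable ψ → (∀ x, ‖ψ x‖ ≤ 1) → Integrable ψ μ := fun ψ h1 h2 =>
    Integrable.of_bound h1.aestronglyMeasurable 1 (Eventually.of_forall h2)
  induction n generalizing φ with
  | zero =>
    simp only [pow_zero, inv_one, one_mul, wmat_zero]
    simp [mob]
  | succ n ih =>
    have h1 : ∫ x, φ x ∂μ = (Fintype.card ι : ℂ)⁻¹ * ∑ i, ∫ y, φ (mob (g i) y) ∂μ := by
      have e : ∀ i, ∫ y, φ (mob (g i) y) ∂μ = ∫ x, φ x ∂(μ.map (mob (g i))) := by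
        intro i
        rw [integral_map (mob_measurable _).aemeasurable hφ.aestronglyMeasurable]
      simp only [e]
      rw [← integral_finsetSum_measure]
      · conv_lhs => rw [hμ.inv]
        rw [integral_smul_measure]
        simp
      · intro i _
        have : IsProbabilityMeasure (μ.map (mob (g i))) := Measure.isProbabilityMeasure_map (mob_measurable _).aemeasurable
        exact Integrable.of_bound hφ.aestronglyMeasurable 1 (Eventually.of_forall hb)
    rw [h1, sum_cons, pow_succ', mul_inv, mul_assoc]
    congr 1
    rw [Finset.mul_sum]
    apply Finset.sum_congr rfl
    intro i _
    rw [ih (fun y => φ (mob (g i) y)) (hφ.comp (mob_measurable _)) (fun x => hb _)]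
    congr 1
    apply Finset.sum_congr rfl
    intro w _
    apply integral_congr_ae
    filter_upwards [hμ.supp] with y hy
    rw [wmat_cons, mob_mul (S.good i) (S.wgood w) hy.1.le]

end Sys

end

section -- part C6

namespace Sys
variable {ι : Type*} [Fintype ι] {g : ι → Mat2} {X Y l c : ℝ}

/-- first level cell -/
def cell (g : Mat2) : Set ℝ := Set.Ioo (mob g 0) (mob g 1)

theorem mob_diff_le (S : Sys g X Y l c) {n : ℕ} (v : Fin n → ι) {y z : ℝ} (hy : y ∈ Set.Icc (0:ℝ) 1)
    (hz : z ∈ Set.Icc (0:ℝ) 1) : |mob (wmat g v) y - mob (wmat g v) z| ≤ 1 / X ^ (2 * n) := by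
  have hX := S.Xpos
  have h1 := (S.wlo v).trans ((S.wgood v).den_ge hy.1)
  have h2 := (S.wlo v).trans ((S.wgood v).den_ge hz.1)
  have h3 := mul_pos ((S.wgood v).den_pos hy.1) ((S.wgood v).den_pos hz.1)
  rw [mob_sub (S.wgood v) hy.1 hz.1, S.wdet, one_mul, abs_div, abs_of_pos h3]
  apply div_le_div₀ zero_le_one _ (by positivity)
  · rw [two_mul, pow_add]
    exact mul_le_mul h1 h2 (by positivity) ((S.wgood v).den_pos hy.1).le
  · rw [abs_le]; constructor <;> linarith [hy.1, hy.2, hz.1, hz.2]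

theorem cell_len (S : Sys g X Y l c) {n : ℕ} (v : Fin n → ι) :
    1 / (2 * ((X * Y) ^ n) ^ 2) ≤ mob (wmat g v) 1 - mob (wmat g v) 0 := by
  have hX := S.Xpos
  have hY := S.Ypos
  have hp := pow_pos hX n
  have h0 := S.wlo v
  have h1 := S.whi v
  have h2 := (S.wgood v).den_le zero_le_one le_rfl
  have h3 := mul_pos ((S.wgood v).den_pos zero_le_one) ((S.wgood v).den_pos le_rfl)
  rw [mob_sub (S.wgood v) zero_le_one le_rfl, S.wdet, one_mul, sub_zero]
  apply div_le_div_of_nonneg_left zero_le_one h3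
  have : wmat g v 1 0 * 1 + wmat g v 1 1 ≤ 2 * (X * Y) ^ n := by linarith
  have h5 : wmat g v 1 0 * 0 + wmat g v 1 1 ≤ (X * Y) ^ n := by linarith
  calc _ ≤ (2 * (X * Y) ^ n) * (X * Y) ^ n := mul_le_mul this h5 ((S.wgood v).den_pos le_rfl).le (by positivity)
    _ = _ := by ring

theorem cell_disj (S : Sys g X Y l c) {n : ℕ} {v w : Fin n → ι} (h : v ≠ w) :
    Disjoint (cell (wmat g v)) (cell (wmat g w)) := by
  rw [Set.disjoint_left]
  intro y hy hz
  obtain ⟨a, ha, e1⟩ := mob_surj (S.wgood v) hy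
  obtain ⟨b, hb, e2⟩ := mob_surj (S.wgood w) hz
  exact h (S.wdisj v w ha hb (e1.trans e2.symm))

theorem cell_sub (S : Sys g X Y l c) {n : ℕ} (v : Fin n → ι) : cell (wmat g v) ⊆ Set.Ioc 0 1 := by
  intro y hy
  have h3 := (S.wgood v).mob_nonneg (le_refl (0:ℝ))
  have h4 := (S.wgood v).mob_le_one zero_le_one le_rfl
  exact ⟨h3.trans_lt hy.1, (hy.2.trans_le h4).le⟩

theorem Fsq_int (S : Sys g X Y l c) (n : ℕ) (t : ℝ) (s : Set ℝ) (hs : volume s ≠ ⊤) :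
    IntegrableOn (fun y => ‖Fav g n t y‖ ^ 2) s := by
  refine Measure.integrableOn_of_bounded (M := 1) hs ?_ (Eventually.of_forall ?_)
  · exact ((Fav_meas n t).norm.pow_const 2).aestronglyMeasurable
  · intro y
    have := S.Fav_bdd n t y
    rw [Real.norm_of_nonneg (by positivity)]
    exact pow_le_one₀ (norm_nonneg _) this

theorem cell_bound (S : Sys g X Y l c) {μ : Measure ℝ} (hμ : SelfSim g μ) {n : ℕ} (v : Fin n → ι)
    {t : ℝ} (ht : 0 < t) :
    ‖∫ z, Fav g n t (mob (wmat g v) z) ∂μ‖ ^ 2 ≤ 2 * (t / X ^ (4 * n)) ^ 2 +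
      4 * ((X * Y) ^ n) ^ 2 * ∫ y in cell (wmat g v), ‖Fav g n t y‖ ^ 2 := by
  have := hμ.prob
  have hX := S.Xpos
  have hY := S.Ypos
  set a := ∫ z, Fav g n t (mob (wmat g v) z) ∂μ with ha
  set ε := t / X ^ (4 * n) with hε
  have p1 : ∀ y ∈ cell (wmat g v), ‖a‖ ^ 2 ≤ 2 * ε ^ 2 + 2 * ‖Fav g n t y‖ ^ 2 := by
    intro y hy
    obtain ⟨z0, hz0, e⟩ := mob_surj (S.wgood v) hy
    have hi : Integrable (fun z => Fav g n t (mob (wmat g v) z)) μ :=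
      Integrable.of_bound ((Fav_meas n t).comp (mob_measurable _)).aestronglyMeasurable 1
        (Eventually.of_forall fun z => S.Fav_bdd n t _)
    have e1 : a - Fav g n t y = ∫ z, (Fav g n t (mob (wmat g v) z) - Fav g n t y) ∂μ := by
      rw [integral_sub hi (integrable_const _)]; simp [ha]
    have e2 : ‖a - Fav g n t y‖ ≤ ε := by
      rw [e1]
      have := norm_integral_le_of_norm_le_const (μ := μ) (C := ε)
        (f := fun z => Fav g n t (mob (wmat g v) z) - Fav g n t y) ?_
      · simpa using this
      · filter_upwards [hμ.supp] with z hz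
        have hm := (S.wgood v).mob_nonneg hz.1.le
        have hm2 := (S.wgood v).mob_nonneg hz0.1.le
        rw [← e]
        refine (S.Fav_lip n t hm hm2).trans ?_
        have h6 := S.mob_diff_le v ⟨hz.1.le, hz.2.le⟩ ⟨hz0.1.le, hz0.2.le⟩
        rw [abs_of_pos ht, hε, div_eq_mul_one_div t]
        apply mul_le_mul_of_nonneg_left _ ht.le
        calc _ ≤ (1 / X ^ (2 * n)) / X ^ (2 * n) := by gcongr
          _ = _ := by rw [div_div, ← pow_add]; congr 2; ring
    have e3 : ‖a‖ ≤ ε + ‖Fav g n t y‖ := by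
      have := norm_add_le (a - Fav g n t y) (Fav g n t y)
      rw [sub_add_cancel] at this
      linarith
    have := norm_nonneg a
    nlinarith [sq_nonneg (ε - ‖Fav g n t y‖)]
  have hlen := S.cell_len v
  set L := mob (wmat g v) 1 - mob (wmat g v) 0 with hL
  have hL0 : 0 < L := lt_of_lt_of_le (by positivity) hlen
  have hvol : volume.real (cell (wmat g v)) = L := by
    rw [cell, Real.volume_real_Ioo_of_le (by linarith)]
  have hfin : volume (cell (wmat g v)) ≠ ⊤ := by rw [cell]; simp
  have key : ∫ y in cell (wmat g v), ‖a‖ ^ 2 ≤ ∫ y in cell (wmat g v), (2 * ε ^ 2 + 2 * ‖Fav g n t y‖ ^ 2) := by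
    apply setIntegral_mono_on
    · exact integrableOn_const hfin
    · exact (integrableOn_const hfin).add ((S.Fsq_int n t _ hfin).const_mul 2)
    · exact measurableSet_Ioo
    · exact p1
  have hic : Integrable (fun _ : ℝ => 2 * ε ^ 2) (volume.restrict (cell (wmat g v))) :=
    integrableOn_const hfin
  rw [integral_add hic ((S.Fsq_int n t _ hfin).const_mul 2), setIntegral_const,
    setIntegral_const, integral_const_mul, hvol, smul_eq_mul, smul_eq_mul] at key
  set I := ∫ y in cell (wmat g v), ‖Fav g n t y‖ ^ 2 with hI
  have hI0 : 0 ≤ I := setIntegral_nonneg measurableSet_Ioo (fun y _ => by positivity)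
  have h7 : ‖a‖ ^ 2 ≤ 2 * ε ^ 2 + 2 * I / L := by
    have : L * ‖a‖ ^ 2 ≤ L * (2 * ε ^ 2 + 2 * I / L) := by
      rw [mul_add, mul_div_cancel₀ _ hL0.ne']; exact key
    exact le_of_mul_le_mul_left this hL0
  refine h7.trans ?_
  have h8 : 1 / L ≤ 2 * ((X * Y) ^ n) ^ 2 := by
    rw [one_div_le hL0 (by positivity)]; exact hlen
  have : 2 * I / L = 2 * I * (1 / L) := by ring
  rw [this]
  nlinarith [mul_le_mul_of_nonneg_left h8 hI0]

theorem decay_sq (S : Sys g X Y l c) {μ : Measure ℝ} (hμ : SelfSim g μ) (n : ℕ)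
    {t : ℝ} (ht : 0 < t) :
    ‖∫ x, Complex.exp (Complex.I * ((t * x : ℝ) : ℂ)) ∂μ‖ ^ 2 ≤ 2 * (t / X ^ (4 * n)) ^ 2 +
      4 * ((X * Y) ^ n) ^ 2 * ((Fintype.card ι : ℝ) ^ n)⁻¹ * ∫ y in (0:ℝ)..1, ‖Fav g n t y‖ ^ 2 := by
  have := hμ.prob
  have hM := S.Mpos
  have hX := S.Xpos
  have hY := S.Ypos
  have h1 : ∀ a : ℝ, ‖Complex.exp (Complex.I * (a : ℂ))‖ = 1 := by
    intro w
    rw [mul_comm]; exact Complex.norm_exp_ofReal_mul_I _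
  have e1 : ∫ x, Complex.exp (Complex.I * ((t * x : ℝ) : ℂ)) ∂μ = ∫ y, Fav g n t y ∂μ := by
    rw [S.inv_integral hμ n (fun x => Complex.exp (Complex.I * ((t * x : ℝ) : ℂ))) (by fun_prop) (fun x => (h1 _).le)]
    unfold Fav
    rw [integral_const_mul, integral_finsetSum]
    intro w _
    have := mob_measurable (wmat g w)
    exact Integrable.of_bound (by fun_prop) 1 (Eventually.of_forall fun z => (h1 _).le)
  rw [e1, S.inv_integral hμ n _ (Fav_meas n t) (S.Fav_bdd n t), norm_mul, mul_pow, norm_inv, norm_pow,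
    Complex.norm_natCast]
  set M : ℝ := ((Fintype.card ι : ℕ) : ℝ)
  have hMn := pow_pos hM n
  have e2 : ‖∑ w : Fin n → ι, ∫ y, Fav g n t (mob (wmat g w) y) ∂μ‖ ^ 2 ≤ M ^ n *
      ∑ w : Fin n → ι, ‖∫ y, Fav g n t (mob (wmat g w) y) ∂μ‖ ^ 2 := by
    have := sq_sum_le_card_mul_sum_sq (s := (Finset.univ : Finset (Fin n → ι)))
      (f := fun w => ‖∫ y, Fav g n t (mob (wmat g w) y) ∂μ‖)
    have h := pow_le_pow_left₀ (norm_nonneg _) (norm_sum_le Finset.univ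
      (fun w : Fin n → ι => ∫ y, Fav g n t (mob (wmat g w) y) ∂μ)) 2
    refine h.trans (this.trans (le_of_eq ?_))
    simp [M]
  have e3 : ∑ w : Fin n → ι, ∫ y in cell (wmat g w), ‖Fav g n t y‖ ^ 2 ≤ ∫ y in (0:ℝ)..1, ‖Fav g n t y‖ ^ 2 := by
    rw [intervalIntegral.integral_of_le zero_le_one, ← integral_iUnion_fintype]
    · apply setIntegral_mono_set (S.Fsq_int n t _ (by simp))
      · exact Eventually.of_forall fun y => by positivity
      · exact (Set.iUnion_subset fun w => S.cell_sub w).eventuallyLE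
    · intro w; exact measurableSet_Ioo
    · intro v w h; exact S.cell_disj h
    · intro w; exact S.Fsq_int n t _ (by simp [cell])
  have e4 : ∑ w : Fin n → ι, ‖∫ y, Fav g n t (mob (wmat g w) y) ∂μ‖ ^ 2 ≤
      M ^ n * (2 * (t / X ^ (4 * n)) ^ 2) + 4 * ((X * Y) ^ n) ^ 2 * ∫ y in (0:ℝ)..1, ‖Fav g n t y‖ ^ 2 := by
    refine (Finset.sum_le_sum fun w _ => S.cell_bound hμ w ht).trans ?_
    rw [Finset.sum_add_distrib]
    have e5 : ∑ w : Fin n → ι, 2 * (t / X ^ (4 * n)) ^ 2 = M ^ n * (2 * (t / X ^ (4 * n)) ^ 2) := by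
      simp [M]
    rw [e5, ← Finset.mul_sum]
    gcongr
  calc _ ≤ (M ^ n)⁻¹ ^ 2 * (M ^ n * (M ^ n * (2 * (t / X ^ (4 * n)) ^ 2) + 4 * ((X * Y) ^ n) ^ 2 * ∫ y in (0:ℝ)..1, ‖Fav g n t y‖ ^ 2)) := by
        gcongr
        exact e2.trans (by gcongr)
    _ = _ := by field_simp

theorem decay_n (S : Sys g X Y l c) {μ : Measure ℝ} (hμ : SelfSim g μ) (n : ℕ)
    {t : ℝ} (h1 : (X ^ 4 / Y ^ 2) ^ n ≤ t) (h2 : t < (X ^ 4 / Y ^ 2) ^ (n + 1)) :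
    ‖∫ x, Complex.exp (Complex.I * ((t * x : ℝ) : ℂ)) ∂μ‖ ^ 2 ≤
      (2 * X ^ 8 + 4 + 4 * (608 * (2 / √c))) * ((Y ^ n)⁻¹) ^ 2 := by
  have hX := S.Xpos
  have hY := S.Ypos
  have hM := S.Mpos
  have ht : 0 < t := lt_of_lt_of_le (by positivity) h1
  have hY1 : 1 ≤ Y := by linarith [S.hY]
  refine (S.decay_sq hμ n ht).trans ?_
  have m2 := S.m2_bound n ht
  set x := X ^ n with hx
  set y := Y ^ n with hy
  have hx0 : 0 < x := by positivity
  have hy0 : 0 < y := by positivity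
  have hy1 : 1 ≤ y := one_le_pow₀ hY1
  set M : ℝ := ((Fintype.card ι : ℕ) : ℝ)
  have hMn : x * y ^ 10 ≤ M ^ n := by
    have := pow_le_pow_left₀ (by positivity) S.card n
    calc _ = (X * Y ^ 10) ^ n := by rw [mul_pow, hx, hy, ← pow_mul, ← pow_mul, mul_comm n]
      _ ≤ _ := this
  have hMi : (M ^ n)⁻¹ ≤ (x * y ^ 10)⁻¹ := inv_anti₀ (by positivity) hMn
  have h1' : x ^ 4 / y ^ 2 ≤ t := by
    refine le_trans (le_of_eq ?_) h1
    rw [div_pow, hx, hy, ← pow_mul, ← pow_mul, ← pow_mul, ← pow_mul, mul_comm n, mul_comm n]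
  have h2' : t ≤ x ^ 4 / y ^ 2 * X ^ 4 := by
    refine h2.le.trans ?_
    rw [pow_succ]
    have e : (X ^ 4 / Y ^ 2) ^ n = x ^ 4 / y ^ 2 := by
      rw [div_pow, hx, hy, ← pow_mul, ← pow_mul, ← pow_mul, ← pow_mul, mul_comm n, mul_comm n]
    rw [e]
    apply mul_le_mul_of_nonneg_left _ (by positivity)
    apply div_le_self (by positivity)
    exact one_le_pow₀ hY1
  have hsq : √(((X * Y) ^ n) ^ 9 / (x ^ 7 * t)) ≤ y ^ 6 / x := by
    rw [mul_pow, ← hx, ← hy]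
    apply Real.sqrt_le_iff.2 ⟨by positivity, ?_⟩
    rw [div_le_iff₀ (by positivity)]
    calc (x * y) ^ 9 ≤ (x * y) ^ 9 * y := le_mul_of_one_le_right (by positivity) hy1
      _ = (y ^ 6 / x) ^ 2 * (x ^ 7 * (x ^ 4 / y ^ 2)) := by field_simp
      _ ≤ _ := by gcongr
  have A : 2 * (t / X ^ (4 * n)) ^ 2 ≤ 2 * X ^ 8 * (y⁻¹) ^ 2 := by
    have e : X ^ (4 * n) = x ^ 4 := by rw [hx, ← pow_mul, mul_comm]
    rw [e]
    have : t / x ^ 4 ≤ X ^ 4 * y⁻¹ := by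
      rw [div_le_iff₀ (by positivity)]
      refine h2'.trans ?_
      have : (y ^ 2)⁻¹ ≤ y⁻¹ := inv_anti₀ hy0 (by nlinarith)
      calc x ^ 4 / y ^ 2 * X ^ 4 = X ^ 4 * (y ^ 2)⁻¹ * x ^ 4 := by ring
        _ ≤ _ := by gcongr
    calc _ ≤ 2 * (X ^ 4 * y⁻¹) ^ 2 := by gcongr
      _ = _ := by ring
  have hm2 : ∫ z in (0:ℝ)..1, ‖Fav g n t z‖ ^ 2 ≤ (x * y ^ 10)⁻¹ + 608 * (y ^ 6 / x) * (2 / √c) := by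
    refine m2.trans ?_
    gcongr
  have B : 4 * ((X * Y) ^ n) ^ 2 * (M ^ n)⁻¹ * ∫ z in (0:ℝ)..1, ‖Fav g n t z‖ ^ 2 ≤
      (4 + 4 * (608 * (2 / √c))) * (y⁻¹) ^ 2 := by
    have nn : 0 ≤ ∫ y in (0:ℝ)..1, ‖Fav g n t y‖ ^ 2 :=
      intervalIntegral.integral_nonneg zero_le_one (fun y _ => by positivity)
    calc _ ≤ 4 * ((X * Y) ^ n) ^ 2 * (x * y ^ 10)⁻¹ * ((x * y ^ 10)⁻¹ + 608 * (y ^ 6 / x) * (2 / √c)) := by gcongr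
      _ = 4 * ((y ^ 16)⁻¹ * (y⁻¹) ^ 2) + 4 * (608 * (2 / √c)) * (y⁻¹) ^ 2 := by
        rw [mul_pow, ← hx, ← hy]; field_simp
      _ ≤ 4 * (1 * (y⁻¹) ^ 2) + 4 * (608 * (2 / √c)) * (y⁻¹) ^ 2 := by
        gcongr
        exact inv_le_one_of_one_le₀ (one_le_pow₀ hy1)
      _ = _ := by ring
  linarith

theorem decay (S : Sys g X Y l c) {μ : Measure ℝ} (hμ : SelfSim g μ) :
    ∃ C η : ℝ, 0 < C ∧ 0 < η ∧ ∀ t : ℝ, 1 ≤ t →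
      ‖∫ x, Complex.exp (Complex.I * ((t * x : ℝ) : ℂ)) ∂μ‖ ≤ C * t ^ (-η) := by
  have hX := S.Xpos
  have hY := S.Ypos
  have hY1 : 1 < Y := by linarith [S.hY]
  set D := X ^ 4 / Y ^ 2 with hD
  have hD1 : Y ≤ D := by
    rw [hD, le_div_iff₀ (by positivity)]
    calc Y * Y ^ 2 = Y ^ 3 := by ring
      _ ≤ Y ^ 4 := pow_le_pow_right₀ hY1.le (by norm_num)
      _ ≤ _ := by have := S.hX; gcongr
  have hD2 : 1 < D := by linarith
  have hD0 : 0 < D := by linarith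
  set K := 2 * X ^ 8 + 4 + 4 * (608 * (2 / √c)) with hK
  have hK0 : 0 < K := by positivity
  set η := Real.log Y / Real.log D with hη
  have hη0 : 0 < η := div_pos (Real.log_pos hY1) (Real.log_pos hD2)
  have hDη : D ^ η = Y := by
    rw [Real.rpow_def_of_pos hD0, hη, mul_div_cancel₀ _ (Real.log_pos hD2).ne', Real.exp_log hY]
  refine ⟨√K * Y, η, by positivity, hη0, fun t ht => ?_⟩
  obtain ⟨n, h1, h2⟩ := exists_nat_pow_near ht hD2
  have h3 := S.decay_n hμ n h1 h2
  have ht0 : 0 < t := by linarith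
  have h4 : ‖∫ x, Complex.exp (Complex.I * ((t * x : ℝ) : ℂ)) ∂μ‖ ≤ √K * (Y ^ n)⁻¹ := by
    apply le_of_sq_le_sq _ (by positivity)
    rw [mul_pow, Real.sq_sqrt hK0.le]
    exact h3
  refine h4.trans ?_
  have h5 : (D ^ (n+1)) ^ (-η) ≤ t ^ (-η) :=
    Real.rpow_le_rpow_of_nonpos ht0 h2.le (by linarith)
  have h6 : (D ^ (n+1)) ^ (-η) = (Y ^ (n+1))⁻¹ := by
    rw [Real.rpow_neg (by positivity), ← Real.rpow_natCast, ← Real.rpow_mul hD0.le, mul_comm,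
      Real.rpow_mul hD0.le, hDη, Real.rpow_natCast]
  rw [h6] at h5
  rw [mul_assoc]
  gcongr
  calc (Y ^ n)⁻¹ = Y * (Y ^ (n+1))⁻¹ := by rw [pow_succ]; field_simp
    _ ≤ _ := by gcongr

end Sys

end

section -- part W1

theorem weyl_interp (e : ℕ → ℂ) (he : ∀ j, ‖e j‖ ≤ 1)
    (h : Tendsto (fun m : ℕ => ‖∑ j ∈ Finset.range (m ^ 2), e j‖ / ((m : ℝ) ^ 2)) atTop (𝓝 0)) :
    Tendsto (fun N : ℕ => ‖∑ j ∈ Finset.range N, e j‖ / (N : ℝ)) atTop (𝓝 0) := by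
  have hs : Tendsto Nat.sqrt atTop atTop := by
    exact tendsto_atTop_atTop.2 fun b => ⟨b ^ 2, fun a ha => by
        rw [Nat.le_sqrt']; exact ha⟩
  have h2 : Tendsto (fun m : ℕ => ‖∑ j ∈ Finset.range (m ^ 2), e j‖ / ((m : ℝ) ^ 2) + 2 / (m:ℝ)) atTop (𝓝 0) := by
    have := h.add (tendsto_const_div_atTop_nhds_zero_nat (2:ℝ))
    simpa using this
  refine squeeze_zero' (Eventually.of_forall fun N => by positivity) ?_ (h2.comp hs)
  filter_upwards [eventually_ge_atTop 1] with N hN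
  set m := Nat.sqrt N with hm
  have hm1 : 1 ≤ m := by rw [hm, Nat.le_sqrt]; omega
  have h3 : m ^ 2 ≤ N := Nat.sqrt_le' N
  have h4 : N ≤ m ^ 2 + 2 * m := by
    have := Nat.sqrt_le_add N
    nlinarith
  have hmr : (0:ℝ) < m := by exact_mod_cast hm1
  have hNr : (0:ℝ) < N := by exact_mod_cast hN
  have h5 : ‖∑ j ∈ Finset.range N, e j‖ ≤ ‖∑ j ∈ Finset.range (m ^ 2), e j‖ + 2 * m := by
    obtain ⟨k, hk⟩ := Nat.exists_eq_add_of_le h3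
    rw [hk, Finset.sum_range_add]
    refine (norm_add_le _ _).trans ?_
    gcongr
    refine (norm_sum_le _ _).trans ?_
    refine (Finset.sum_le_card_nsmul _ _ 1 fun j _ => he _).trans ?_
    simp
    have : k ≤ 2 * m := by omega
    exact_mod_cast this
  have h3r : (m:ℝ) ^ 2 ≤ N := by exact_mod_cast h3
  calc _ ≤ (‖∑ j ∈ Finset.range (m ^ 2), e j‖ + 2 * m) / N := by gcongr
    _ ≤ (‖∑ j ∈ Finset.range (m ^ 2), e j‖ + 2 * m) / m ^ 2 := by gcongr
    _ = _ := by simp only [Function.comp, ← hm]; field_simp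

noncomputable def wexp (k q : ℕ) (x : ℝ) (j : ℕ) : ℂ :=
  Complex.exp (Complex.I * ((2 * Real.pi * k * q ^ j * x : ℝ) : ℂ))

theorem wexp_norm (k q : ℕ) (x : ℝ) (j : ℕ) : ‖wexp k q x j‖ = 1 := by
  unfold wexp
  rw [mul_comm]; exact Complex.norm_exp_ofReal_mul_I _

theorem wexp_meas (k q : ℕ) (j : ℕ) : Measurable (fun x => wexp k q x j) := by
  unfold wexp; fun_prop

theorem weyl_l2 (μ : Measure ℝ) [IsProbabilityMeasure μ] (C η : ℝ) (hC : 0 < C) (hη : 0 < η)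
    (hd : ∀ t : ℝ, 1 ≤ t → ‖∫ x, Complex.exp (Complex.I * ((t * x : ℝ) : ℂ)) ∂μ‖ ≤ C * t ^ (-η))
    (k q : ℕ) (hk : 1 ≤ k) (hq : 2 ≤ q) : ∃ K : ℝ, 0 < K ∧ ∀ N : ℕ, 1 ≤ N →
    ∫ x, ‖∑ j ∈ Finset.range N, wexp k q x j‖ ^ 2 ∂μ ≤ K * N := by
  have hq' : (2:ℝ) ≤ q := by exact_mod_cast hq
  have hk' : (1:ℝ) ≤ k := by exact_mod_cast hk
  set ρ : ℝ := (2:ℝ) ^ (-η / 2) with hρ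
  have hρ0 : 0 < ρ := by positivity
  have hρ1 : ρ < 1 := Real.rpow_lt_one_of_one_lt_of_neg one_lt_two (by linarith)
  -- off-diagonal, ordered
  have off : ∀ i j : ℕ, j < i → ‖∫ x, wexp k q x i * (starRingEnd ℂ) (wexp k q x j) ∂μ‖ ≤ C * (ρ ^ i * ρ ^ j) := by
    intro i j hij
    set t : ℝ := 2 * Real.pi * k * (q ^ i - q ^ j) with ht
    have e : ∀ x, wexp k q x i * (starRingEnd ℂ) (wexp k q x j) = Complex.exp (Complex.I * ((t * x : ℝ) : ℂ)) := by
      intro x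
      unfold wexp
      rw [← Complex.exp_conj, map_mul, Complex.conj_I, Complex.conj_ofReal, ← Complex.exp_add]
      congr 1
      rw [ht]; push_cast; ring
    simp only [e]
    have hqj : (2:ℝ) * q ^ j ≤ q ^ i := by
      calc (2:ℝ) * q ^ j ≤ q * q ^ j := by gcongr
        _ = (q:ℝ) ^ (j+1) := by ring
        _ ≤ _ := pow_le_pow_right₀ (by linarith) hij
    have ht2 : (2:ℝ) ^ i ≤ t := by
      have h1 : (2:ℝ) ^ i ≤ q ^ i := by gcongr
      have h2 : (q:ℝ) ^ i ≤ 2 * (q ^ i - q ^ j) := by linarith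
      have h3 : (1:ℝ) ≤ Real.pi * k := by nlinarith [Real.pi_gt_three]
      have h4 : (0:ℝ) ≤ q ^ i - q ^ j := by
        have : (0:ℝ) ≤ q ^ j := by positivity
        linarith
      rw [ht]
      nlinarith [mul_le_mul_of_nonneg_right h3 h4]
    have h1t : 1 ≤ t := le_trans (one_le_pow₀ one_le_two) ht2
    refine (hd t h1t).trans ?_
    gcongr
    calc t ^ (-η) ≤ ((2:ℝ) ^ i) ^ (-η) := Real.rpow_le_rpow_of_nonpos (by positivity) ht2 (by linarith)
      _ = ρ ^ i * ρ ^ i := by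
        rw [hρ, ← Real.rpow_natCast, ← Real.rpow_natCast, ← Real.rpow_mul zero_le_two, ← Real.rpow_mul zero_le_two,
          ← Real.rpow_add zero_lt_two]
        congr 1; ring
      _ ≤ _ := by
        gcongr ?_ * ?_
        exact pow_le_pow_of_le_one hρ0.le hρ1.le hij.le
  have all : ∀ i j : ℕ, ‖∫ x, wexp k q x i * (starRingEnd ℂ) (wexp k q x j) ∂μ‖ ≤
      (if i = j then 1 else 0) + C * (ρ ^ i * ρ ^ j) := by
    intro i j
    rcases lt_trichotomy i j with h | h | h
    · rw [if_neg h.ne, zero_add]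
      have := off j i h
      have e : ∫ x, wexp k q x i * (starRingEnd ℂ) (wexp k q x j) ∂μ =
          (starRingEnd ℂ) (∫ x, wexp k q x j * (starRingEnd ℂ) (wexp k q x i) ∂μ) := by
        rw [← integral_conj]
        congr 1; ext x; simp [mul_comm]
      rw [e, RCLike.norm_conj, mul_comm (ρ ^ i)]
      exact this
    · rw [if_pos h]
      have : ‖∫ x, wexp k q x i * (starRingEnd ℂ) (wexp k q x j) ∂μ‖ ≤ 1 := by
        have := norm_integral_le_of_norm_le_const (μ := μ) (C := 1)
          (f := fun x => wexp k q x i * (starRingEnd ℂ) (wexp k q x j)) (Eventually.of_forall fun x => by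
            rw [norm_mul, RCLike.norm_conj, wexp_norm, wexp_norm, one_mul])
        simpa using this
      have : 0 ≤ C * (ρ ^ i * ρ ^ j) := by positivity
      linarith
    · rw [if_neg h.ne', zero_add]
      exact off i j h
  refine ⟨1 + C * ((1 - ρ)⁻¹ * (1 - ρ)⁻¹), ?_, fun N hN => ?_⟩
  · have : 0 < 1 - ρ := by linarith
    positivity
  have ptw : ∀ x, ((‖∑ j ∈ Finset.range N, wexp k q x j‖ ^ 2 : ℝ) : ℂ) =
      ∑ i ∈ Finset.range N, ∑ j ∈ Finset.range N, wexp k q x i * (starRingEnd ℂ) (wexp k q x j) := by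
    intro x
    rw [← Complex.normSq_eq_norm_sq, ← Complex.mul_conj, map_sum, Finset.sum_mul_sum]
  have nn : 0 ≤ ∫ x, ‖∑ j ∈ Finset.range N, wexp k q x j‖ ^ 2 ∂μ := integral_nonneg fun x => by positivity
  have hIntg : ∀ i j, Integrable (fun x => wexp k q x i * (starRingEnd ℂ) (wexp k q x j)) μ := by
    intro i j
    refine Integrable.of_bound (C := 1) ?_ (Eventually.of_forall fun x => ?_)
    · have h1 := wexp_meas k q i
      have h2 := wexp_meas k q j
      have h3 : Measurable (fun x => (starRingEnd ℂ) (wexp k q x j)) := Complex.continuous_conj.measurable.comp h2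
      exact (h1.mul h3).aestronglyMeasurable
    · rw [norm_mul, RCLike.norm_conj, wexp_norm, wexp_norm, one_mul]
  have e1 : ((∫ x, ‖∑ j ∈ Finset.range N, wexp k q x j‖ ^ 2 ∂μ : ℝ) : ℂ) =
      ∑ i ∈ Finset.range N, ∑ j ∈ Finset.range N, ∫ x, wexp k q x i * (starRingEnd ℂ) (wexp k q x j) ∂μ := by
    rw [← integral_complex_ofReal]
    simp only [ptw]
    rw [integral_finsetSum]
    · apply Finset.sum_congr rfl; intro i _
      rw [integral_finsetSum]
      intro j _; exact hIntg i j
    · intro i _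
      exact integrable_finsetSum _ fun j _ => hIntg i j
  have e2 : ∫ x, ‖∑ j ∈ Finset.range N, wexp k q x j‖ ^ 2 ∂μ =
      ‖((∫ x, ‖∑ j ∈ Finset.range N, wexp k q x j‖ ^ 2 ∂μ : ℝ) : ℂ)‖ := by
    rw [Complex.norm_real, Real.norm_of_nonneg nn]
  clear ptw
  rw [e2, e1]
  refine ((norm_sum_le _ _).trans (Finset.sum_le_sum fun i _ => (norm_sum_le _ _).trans
    (Finset.sum_le_sum fun j _ => all i j))).trans ?_
  simp only [Finset.sum_add_distrib]
  have s1 : ∑ i ∈ Finset.range N, ∑ j ∈ Finset.range N, (if i = j then (1:ℝ) else 0) = N := by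
    clear e1 e2 all off hIntg nn
    rw [Finset.sum_congr rfl (g := fun _ => (1:ℝ))]
    · simp
    · intro i hi
      rw [Finset.sum_ite_eq, if_pos hi]
  have s2 : ∑ i ∈ Finset.range N, ∑ j ∈ Finset.range N, C * (ρ ^ i * ρ ^ j) ≤ C * ((1 - ρ)⁻¹ * (1 - ρ)⁻¹) := by
    simp only [← Finset.mul_sum]
    rw [← Finset.sum_mul]
    have : ∑ i ∈ Finset.range N, ρ ^ i ≤ (1 - ρ)⁻¹ := by
      rw [← tsum_geometric_of_lt_one hρ0.le hρ1]
      exact (summable_geometric_of_lt_one hρ0.le hρ1).sum_le_tsum _ (fun _ _ => by positivity)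
    have h0 : 0 ≤ ∑ i ∈ Finset.range N, ρ ^ i := Finset.sum_nonneg fun i _ => (pow_pos hρ0 i).le
    exact mul_le_mul_of_nonneg_left (mul_le_mul this this h0 (h0.trans this)) hC.le
  rw [s1]
  have hNr : (1:ℝ) ≤ N := by exact_mod_cast hN
  have : 0 ≤ C * ((1 - ρ)⁻¹ * (1 - ρ)⁻¹) := by
    have : 0 < 1 - ρ := by linarith
    positivity
  nlinarith

theorem weyl_ae (μ : Measure ℝ) [IsProbabilityMeasure μ] (C η : ℝ) (hC : 0 < C) (hη : 0 < η)
    (hd : ∀ t : ℝ, 1 ≤ t → ‖∫ x, Complex.exp (Complex.I * ((t * x : ℝ) : ℂ)) ∂μ‖ ≤ C * t ^ (-η))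
    (k q : ℕ) (hk : 1 ≤ k) (hq : 2 ≤ q) :
    ∀ᵐ x ∂μ, Tendsto (fun N : ℕ => ‖∑ j ∈ Finset.range N, wexp k q x j‖ / (N : ℝ)) atTop (𝓝 0) := by
  obtain ⟨K, hK, hb⟩ := weyl_l2 μ C η hC hη hd k q hk hq
  set F : ℕ → ℝ → ℝ := fun m x => (‖∑ j ∈ Finset.range (m ^ 2), wexp k q x j‖ / ((m : ℝ) ^ 2)) ^ 2 with hF
  have hFm : ∀ m, Measurable (F m) := by
    intro m
    have : Measurable fun x => ∑ j ∈ Finset.range (m ^ 2), wexp k q x j :=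
      Finset.measurable_fun_sum _ fun j _ => wexp_meas k q j
    exact (this.norm.div_const _).pow_const 2
  have hFi : ∀ m, Integrable (F m) μ := by
    intro m
    refine Integrable.of_bound (C := 1) (hFm m).aestronglyMeasurable (Eventually.of_forall fun x => ?_)
    rw [hF, Real.norm_of_nonneg (by positivity)]
    apply pow_le_one₀ (by positivity)
    apply div_le_one_of_le₀ _ (by positivity)
    refine (norm_sum_le _ _).trans ?_
    simp [wexp_norm]
  have hI : ∀ m, ∫ x, F m x ∂μ ≤ K * (1 / (m:ℝ) ^ 2) := by
    intro m
    rcases Nat.eq_zero_or_pos m with h | h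
    · subst h; simp [hF]
    · have h1 := hb (m ^ 2) (Nat.one_le_pow _ _ h)
      have hm : (0:ℝ) < m := by exact_mod_cast h
      simp only [hF, div_pow]
      rw [integral_div, div_le_iff₀ (by positivity)]
      refine h1.trans (le_of_eq ?_)
      push_cast
      field_simp
  have hsum : ∑' m, ∫⁻ x, ENNReal.ofReal (F m x) ∂μ ≠ ⊤ := by
    have h2 : Summable fun m : ℕ => K * (1 / (m:ℝ) ^ 2) :=
      (Real.summable_one_div_nat_pow.2 one_lt_two).mul_left K
    have h3 : ∑' m : ℕ, ENNReal.ofReal (K * (1 / (m:ℝ) ^ 2)) ≠ ⊤ := by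
      rw [← ENNReal.ofReal_tsum_of_nonneg (fun m => by positivity) h2]
      exact ENNReal.ofReal_ne_top
    refine ne_top_of_le_ne_top h3 (ENNReal.tsum_le_tsum fun m => ?_)
    rw [← ofReal_integral_eq_lintegral_ofReal (hFi m) (Eventually.of_forall fun x => by simp only [hF]; positivity)]
    exact ENNReal.ofReal_le_ofReal (hI m)
  rw [← lintegral_tsum fun m => (hFm m).ennreal_ofReal.aemeasurable] at hsum
  have hae := ae_lt_top (Measurable.tsum fun m => (hFm m).ennreal_ofReal) hsum
  filter_upwards [hae] with x hx
  apply weyl_interp _ (fun j => (wexp_norm k q x j).le)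
  have h4 := ENNReal.tendsto_atTop_zero_of_tsum_ne_top hx.ne
  have h5 : Tendsto (fun m => F m x) atTop (𝓝 0) := by
    have := (ENNReal.tendsto_toReal ENNReal.zero_ne_top).comp h4
    refine this.congr fun m => ?_
    simp only [Function.comp]
    rw [ENNReal.toReal_ofReal (by simp only [hF]; positivity)]
  have h6 := (Real.continuous_sqrt.tendsto 0).comp h5
  rw [Real.sqrt_zero] at h6
  refine h6.congr fun m => ?_
  simp only [Function.comp, hF]
  rw [Real.sqrt_sq (by positivity)]

end

section -- part W2

/-- averages along a sequence in the circle -/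
noncomputable def cavg (u : ℕ → UnitAddCircle) (N : ℕ) (f : C(UnitAddCircle, ℂ)) : ℂ :=
  ((N : ℂ) + 1)⁻¹ * ∑ n ∈ Finset.range (N + 1), f (u n)

theorem cavg_norm_le (u : ℕ → UnitAddCircle) (N : ℕ) (f : C(UnitAddCircle, ℂ)) : ‖cavg u N f‖ ≤ ‖f‖ := by
  unfold cavg
  have h : ‖((N:ℂ) + 1)⁻¹‖ = ((N:ℝ) + 1)⁻¹ := by
    rw [norm_inv]; congr 1
    exact_mod_cast Complex.norm_natCast (N + 1)
  rw [norm_mul, h, inv_mul_le_iff₀ (by positivity)]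
  refine (norm_sum_le _ _).trans ?_
  refine (Finset.sum_le_card_nsmul _ _ ‖f‖ fun n _ => f.norm_coe_le_norm _).trans (le_of_eq ?_)
  simp

theorem integral_fourier_zero (n : ℤ) (hn : n ≠ 0) :
    ∫ z : UnitAddCircle, fourier n z ∂AddCircle.haarAddCircle = 0 :=
  integral_eq_zero_of_add_right_eq_neg (μ := AddCircle.haarAddCircle)
      (fourier_add_half_inv_index hn (Fact.out : (0:ℝ) < 1))

theorem cavg_tendsto (u : ℕ → UnitAddCircle)
    (hu : ∀ k : ℕ, 1 ≤ k → Tendsto (fun N => cavg u N (fourier (k:ℤ))) atTop (𝓝 0))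
    (f : C(UnitAddCircle, ℂ)) :
    Tendsto (fun N => cavg u N f) atTop (𝓝 (∫ z, f z ∂AddCircle.haarAddCircle)) := by
  have hall : ∀ k : ℤ, Tendsto (fun N => cavg u N (fourier k)) atTop
      (𝓝 (∫ z : UnitAddCircle, fourier k z ∂AddCircle.haarAddCircle)) := by
    intro k
    rcases lt_trichotomy k 0 with h | h | h
    · obtain ⟨m, hm⟩ := Int.exists_eq_neg_ofNat h.le
      subst hm
      rw [integral_fourier_zero _ h.ne]
      have := hu m (by omega)
      have h2 := (Complex.continuous_conj.tendsto 0).comp this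
      rw [map_zero] at h2
      refine h2.congr fun N => ?_
      simp only [Function.comp, cavg]
      rw [map_mul, map_sum, map_inv₀]
      simp only [← fourier_neg]
      simp
    · subst h
      simp only [fourier_zero, integral_const, cavg]
      simp
      refine tendsto_const_nhds.congr fun N => ?_
      rw [inv_mul_cancel₀]
      exact_mod_cast (Nat.succ_ne_zero N)
    · rw [integral_fourier_zero _ h.ne']
      obtain ⟨m, hm⟩ := Int.eq_ofNat_of_zero_le h.le
      subst hm
      exact hu m (by omega)
  have hspan : ∀ f ∈ Submodule.span ℂ (Set.range (fourier (T := 1))), Tendsto (fun N => cavg u N f) atTop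
      (𝓝 (∫ z, f z ∂AddCircle.haarAddCircle)) := by
    intro f hf
    have hi : ∀ f : C(UnitAddCircle, ℂ), Integrable f (AddCircle.haarAddCircle (T := 1)) := fun f =>
      f.continuous.integrable_of_hasCompactSupport (HasCompactSupport.of_compactSpace _)
    induction hf using Submodule.span_induction with
    | mem x h => obtain ⟨k, rfl⟩ := h; exact hall k
    | zero => simp [cavg]
    | add x y _ _ h1 h2 =>
      have := h1.add h2
      rw [← integral_add (hi x) (hi y)] at this
      refine this.congr fun N => ?_
      simp only [cavg, ContinuousMap.add_apply, Finset.sum_add_distrib]; ring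
    | smul a x _ h =>
      have := h.const_mul a
      rw [← integral_const_mul] at this
      refine this.congr fun N => ?_
      simp only [cavg, ContinuousMap.smul_apply, smul_eq_mul, ← Finset.mul_sum]; ring
  have hf : f ∈ (Submodule.span ℂ (Set.range (fourier (T := 1)))).topologicalClosure := by
    rw [span_fourier_closure_eq_top]; trivial
  have hf' : f ∈ closure ((Submodule.span ℂ (Set.range (fourier (T := 1))) : Submodule ℂ C(UnitAddCircle, ℂ)) : Set C(UnitAddCircle, ℂ)) := hf
  rw [Metric.mem_closure_iff] at hf'
  have hi : ∀ f : C(UnitAddCircle, ℂ), Integrable f (AddCircle.haarAddCircle (T := 1)) := fun f =>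
      f.continuous.integrable_of_hasCompactSupport (HasCompactSupport.of_compactSpace _)
  rw [Metric.tendsto_atTop]
  intro ε hε
  obtain ⟨h, hh, hd⟩ := hf' (ε / 3) (by positivity)
  obtain ⟨N0, hN0⟩ := (Metric.tendsto_atTop.1 (hspan h hh)) (ε / 3) (by positivity)
  refine ⟨N0, fun N hN => ?_⟩
  have h1 := hN0 N hN
  rw [dist_eq_norm] at h1 hd ⊢
  have e1 : cavg u N f - cavg u N h = cavg u N (f - h) := by
    simp only [cavg, ContinuousMap.sub_apply, Finset.sum_sub_distrib]; ring
  have b1 := cavg_norm_le u N (f - h)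
  rw [← e1] at b1
  have b2 : ‖∫ z, h z ∂(AddCircle.haarAddCircle (T := 1)) - ∫ z, f z ∂AddCircle.haarAddCircle‖ ≤ ‖f - h‖ := by
    rw [← integral_sub (hi h) (hi f)]
    have := norm_integral_le_of_norm_le_const (μ := AddCircle.haarAddCircle (T := 1)) (C := ‖f - h‖)
      (f := fun z => h z - f z) (Eventually.of_forall fun z => by
        rw [norm_sub_rev]; exact (f - h).norm_coe_le_norm z)
    simpa using this
  calc ‖cavg u N f - ∫ z, f z ∂AddCircle.haarAddCircle‖
      = ‖(cavg u N f - cavg u N h) + (cavg u N h - ∫ z, h z ∂AddCircle.haarAddCircle) +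
        (∫ z, h z ∂(AddCircle.haarAddCircle (T := 1)) - ∫ z, f z ∂AddCircle.haarAddCircle)‖ := by congr 1; ring
    _ ≤ _ := norm_add₃_le
    _ < ε := by linarith

/-- empirical measures -/
noncomputable def emp (u : ℕ → UnitAddCircle) (N : ℕ) : Measure UnitAddCircle :=
  ((N + 1 : ℕ) : ℝ≥0∞)⁻¹ • ∑ n ∈ Finset.range (N + 1), Measure.dirac (u n)

theorem emp_prob (u : ℕ → UnitAddCircle) (N : ℕ) : IsProbabilityMeasure (emp u N) := by
  constructor
  simp only [emp, Measure.smul_apply, Measure.finsetSum_apply, smul_eq_mul, measure_univ, Finset.sum_const,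
    Finset.card_range, nsmul_eq_mul, mul_one]
  exact ENNReal.inv_mul_cancel (by simp) (by simp)

theorem emp_apply (u : ℕ → UnitAddCircle) (N : ℕ) (G : Set UnitAddCircle) (hG : MeasurableSet G) :
    emp u N G = ENNReal.ofReal ((((Finset.range (N+1)).filter fun n => u n ∈ G).card : ℝ) / ((N + 1 : ℕ) : ℝ)) := by
  have h0 : (0:ℝ) < ((N + 1 : ℕ) : ℝ) := by positivity
  simp only [emp, Measure.smul_apply, Measure.finsetSum_apply, smul_eq_mul, Measure.dirac_apply' _ hG]
  rw [ENNReal.ofReal_div_of_pos h0, ENNReal.ofReal_natCast, ENNReal.ofReal_natCast, mul_comm, ← div_eq_mul_inv]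
  congr 1
  simp [Set.indicator_apply]

theorem emp_integral (u : ℕ → UnitAddCircle) (N : ℕ) (f : UnitAddCircle → ℝ) :
    ∫ z, f z ∂(emp u N) = ((N:ℝ) + 1)⁻¹ * ∑ n ∈ Finset.range (N+1), f (u n) := by
  unfold emp
  rw [integral_smul_measure, integral_finsetSum_measure]
  · simp only [integral_dirac]
    rw [ENNReal.toReal_inv, ENNReal.toReal_natCast, smul_eq_mul]
    push_cast; rfl
  · intro n _; exact integrable_dirac (by simp)

theorem equi_lower (u : ℕ → ℝ)
    (hu : ∀ k : ℕ, 1 ≤ k → Tendsto (fun N : ℕ => ‖∑ j ∈ Finset.range N, Complex.exp (Complex.I * ((2 * Real.pi * k * u j : ℝ) : ℂ))‖ / (N : ℝ)) atTop (𝓝 0))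
    (a b : ℝ) (ha : 0 ≤ a) (hb : b ≤ 1) (ε : ℝ) (hε : 0 < ε) :
    ∀ᶠ N : ℕ in atTop, b - a - ε ≤ (((Finset.range N).filter fun n => Int.fract (u n) ∈ Set.Ioo a b).card : ℝ) / N := by
  rcases le_or_gt (b - a - ε) 0 with hneg | hpos
  · exact Eventually.of_forall fun N => hneg.trans (by positivity)
  set v : ℕ → UnitAddCircle := fun n => (u n : UnitAddCircle) with hv
  have hw : ∀ k : ℕ, 1 ≤ k → Tendsto (fun N => cavg v N (fourier (k:ℤ))) atTop (𝓝 0) := by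
    intro k hk
    rw [tendsto_zero_iff_norm_tendsto_zero]
    refine ((hu k hk).comp (tendsto_add_atTop_nat 1)).congr fun N => ?_
    simp only [Function.comp, cavg]
    rw [norm_mul, norm_inv, div_eq_inv_mul]
    congr 1
    · congr 1
      exact_mod_cast (Complex.norm_natCast (N + 1)).symm
    · congr 1
      apply Finset.sum_congr rfl
      intro n _
      rw [hv, fourier_coe_apply]
      congr 1
      push_cast; ring
  have hlim := cavg_tendsto v hw
  let P : ℕ → ProbabilityMeasure UnitAddCircle := fun N => ⟨emp v N, emp_prob v N⟩
  let Q : ProbabilityMeasure UnitAddCircle := ⟨AddCircle.haarAddCircle, inferInstance⟩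
  have hPQ : Tendsto P atTop (𝓝 Q) := by
    rw [ProbabilityMeasure.tendsto_iff_forall_integral_tendsto]
    intro f
    have h1 := hlim ⟨fun z => (f z : ℂ), by fun_prop⟩
    simp only [ContinuousMap.coe_mk] at h1
    rw [integral_complex_ofReal] at h1
    have h2 := (Complex.continuous_re.tendsto _).comp h1
    simp only [Complex.ofReal_re] at h2
    refine h2.congr fun N => ?_
    simp only [Function.comp, P, ProbabilityMeasure.coe_mk, emp_integral, cavg, ContinuousMap.coe_mk]
    have : ((N:ℂ) + 1)⁻¹ * ∑ n ∈ Finset.range (N+1), ((f (v n) : ℝ) : ℂ) = (((N:ℝ) + 1)⁻¹ * ∑ n ∈ Finset.range (N+1), f (v n) : ℝ) := by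
      push_cast; rfl
    rw [this, Complex.ofReal_re]
  set G : Set UnitAddCircle := (fun z : ℝ => (z : UnitAddCircle)) '' Set.Ioo a b with hG
  have hGo : IsOpen G := QuotientAddGroup.isOpenMap_coe _ isOpen_Ioo
  have hvol : ENNReal.ofReal (b - a) ≤ AddCircle.haarAddCircle (T := 1) G := by
    have e : (volume : Measure UnitAddCircle) = AddCircle.haarAddCircle (T := 1) := by
      rw [AddCircle.volume_eq_smul_haarAddCircle]; simp
    rw [← e, ← (AddCircle.measurePreserving_mk 1 0).measure_preimage hGo.measurableSet.nullMeasurableSet,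
      Measure.restrict_apply' measurableSet_Ioc, ← Real.volume_Ioo]
    apply measure_mono
    intro z hz
    exact ⟨⟨z, hz, rfl⟩, ⟨by linarith [hz.1], by linarith [hz.2]⟩⟩
  have hli := ProbabilityMeasure.le_liminf_measure_open_of_tendsto hPQ hGo
  have hlt : ENNReal.ofReal (b - a - ε) < liminf (fun i => (P i : Measure UnitAddCircle) G) atTop := by
    refine lt_of_lt_of_le ?_ (hvol.trans hli)
    exact (ENNReal.ofReal_lt_ofReal_iff (by linarith)).2 (by linarith)
  have hev := eventually_lt_of_lt_liminf hlt
  have hev2 : ∀ᶠ N : ℕ in atTop, b - a - ε ≤ (((Finset.range (N+1)).filter fun n => Int.fract (u n) ∈ Set.Ioo a b).card : ℝ) / ((N + 1 : ℕ) : ℝ) := by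
    filter_upwards [hev] with N hN
    change _ < emp v N G at hN
    rw [emp_apply _ _ _ hGo.measurableSet] at hN
    have h3 := (ENNReal.ofReal_lt_ofReal_iff_of_nonneg hpos.le).1 hN
    refine h3.le.trans ?_
    refine div_le_div_of_nonneg_right ?_ (by positivity)
    refine Nat.cast_le.2 (Finset.card_le_card ?_)
    intro n hn
    rw [Finset.mem_filter] at hn ⊢
    refine ⟨hn.1, ?_⟩
    replace hn := hn.2
    obtain ⟨z, hz, e⟩ := hn
    have e2 : (z : UnitAddCircle) = (u n : UnitAddCircle) := e
    have e3 := (QuotientAddGroup.eq.1 e2)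
    obtain ⟨m, hm⟩ := AddSubgroup.mem_zmultiples_iff.1 e3
    have hz1 : Int.fract (u n) = z := by
      rw [Int.fract_eq_iff]
      refine ⟨by linarith [hz.1], by linarith [hz.2], m, ?_⟩
      simp at hm; linarith
    rw [hz1]; exact hz
  obtain ⟨N0, hN0⟩ := eventually_atTop.1 hev2
  refine eventually_atTop.2 ⟨N0 + 1, fun N hN => ?_⟩
  obtain ⟨M, rfl⟩ : ∃ M, N = M + 1 := ⟨N - 1, by omega⟩
  exact hN0 M (by omega)

end

section -- part W3

theorem tendsto_of_lower {κ : Type*} [Fintype κ] (f : ℕ → κ → ℝ) (p : κ → ℝ) (hp : ∑ k, p k = 1)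
    (hf : ∀ N, 1 ≤ N → ∑ k, f N k = 1)
    (hl : ∀ k, ∀ ε > 0, ∀ᶠ N in atTop, p k - ε ≤ f N k) (k : κ) :
    Tendsto (fun N => f N k) atTop (𝓝 (p k)) := by
  rw [Metric.tendsto_nhds]
  intro ε hε
  have hc : (0:ℝ) < Fintype.card κ + 1 := by positivity
  set δ := ε / (Fintype.card κ + 1) with hδ
  have hδ0 : 0 < δ := by positivity
  have hall : ∀ᶠ N in atTop, ∀ k, p k - δ ≤ f N k := eventually_all.2 fun k => hl k δ hδ0
  filter_upwards [hall, eventually_ge_atTop 1] with N hN h1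
  have e1 := hf N h1
  have e2 : ∑ j, (f N j - p j + δ) = Fintype.card κ * δ := by
    rw [Finset.sum_add_distrib, Finset.sum_sub_distrib, e1, hp]; simp
  have e3 : f N k - p k + δ ≤ ∑ j, (f N j - p j + δ) :=
    Finset.single_le_sum (f := fun j => f N j - p j + δ) (fun j _ => by linarith [hN j]) (Finset.mem_univ k)
  have e4 : ε = Fintype.card κ * δ + δ := by rw [hδ]; field_simp
  have := hN k
  rw [Real.dist_eq, abs_lt]
  have hc0 : (0:ℝ) ≤ Fintype.card κ * δ := by positivity
  have hcard : (1:ℝ) ≤ Fintype.card κ := by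
    have : 0 < Fintype.card κ := Fintype.card_pos_iff.2 ⟨k⟩
    exact_mod_cast this
  constructor
  · nlinarith
  · linarith

theorem qdigit_lt (q : ℕ) (hq : 2 ≤ q) (x : ℝ) (n : ℕ) : qdigit q x n < q :=
  Nat.mod_lt _ (by omega)

theorem qdigit_shift (q : ℕ) (hq : 2 ≤ q) (x : ℝ) (hx : 0 ≤ x) (n i : ℕ) :
    qdigit q x (n + i) = qdigit q (Int.fract ((q:ℝ) ^ n * x)) i := by
  unfold qdigit
  rw [Int.floor_toNat, Int.floor_toNat]
  have h0 : 0 ≤ (q:ℝ) ^ n * x := by positivity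
  set z := (q:ℝ) ^ n * x with hz
  have e : x * (q:ℝ) ^ (n + i + 1) = Int.fract z * (q:ℝ) ^ (i+1) + ((⌊z⌋₊ * q ^ i * q : ℕ) : ℝ) := by
    have h1 : z = Int.fract z + (⌊z⌋₊ : ℝ) := by
      rw [natCast_floor_eq_intCast_floor h0, Int.fract_add_floor]
    have h2 : x * (q:ℝ) ^ (n + i + 1) = z * (q:ℝ) ^ (i+1) := by rw [hz]; ring
    rw [h2]
    nth_rewrite 1 [h1]
    push_cast; ring
  rw [e, Nat.floor_add_natCast (by have := Int.fract_nonneg z; positivity), Nat.add_mul_mod_self_right]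

theorem qdigit_interval (q : ℕ) (hq : 2 ≤ q) (m : ℕ) (d : Fin m → Fin q) :
    ∃ D : ℕ, D < q ^ m ∧ ∀ y : ℝ, y ∈ Set.Ioo ((D:ℝ) / (q:ℝ) ^ m) ((D + 1 : ℝ) / (q:ℝ) ^ m) →
      ∀ i : Fin m, qdigit q y i = d i := by
  set D := finFunctionFinEquiv (fun b => d (Fin.rev b)) with hD
  refine ⟨D, D.2, fun y hy i => ?_⟩
  have hq0 : (0:ℝ) < q := by exact_mod_cast (by omega : 0 < q)
  have hqm : (0:ℝ) < (q:ℝ) ^ m := by positivity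
  have h1 : (D:ℝ) ≤ y * (q:ℝ) ^ m := by
    have := hy.1; rw [div_lt_iff₀ hqm] at this; exact this.le
  have h2 : y * (q:ℝ) ^ m < (D:ℝ) + 1 := by
    have := hy.2; rwa [lt_div_iff₀ hqm] at this
  have h3 : ⌊y * (q:ℝ) ^ m⌋₊ = D := by
    rw [Nat.floor_eq_iff ((Nat.cast_nonneg _).trans h1)]; exact ⟨h1, h2⟩
  have h4 := finFunctionFinEquiv_symm_apply_val D (Fin.rev i)
  rw [hD, Equiv.symm_apply_apply, Fin.rev_rev, ← hD] at h4
  rw [h4]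
  unfold qdigit
  rw [Int.floor_toNat]
  have e : y * (q:ℝ) ^ ((i:ℕ) + 1) = y * (q:ℝ) ^ m / ((q ^ ((Fin.rev i : Fin m) : ℕ) : ℕ) : ℝ) := by
    have : m = (i:ℕ) + 1 + ((Fin.rev i : Fin m) : ℕ) := by
      rw [Fin.val_rev]; omega
    have h5 : (q:ℝ) ^ m = (q:ℝ) ^ ((i:ℕ) + 1) * (q:ℝ) ^ ((Fin.rev i : Fin m) : ℕ) := by
      rw [← pow_add, ← this]
    rw [h5]
    push_cast
    field_simp
  rw [e, Nat.floor_div_natCast, h3]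

theorem normal_of_weyl (q : ℕ) (hq : 2 ≤ q) (x : ℝ) (hx : 0 ≤ x)
    (hw : ∀ k : ℕ, 1 ≤ k → Tendsto (fun N : ℕ => ‖∑ j ∈ Finset.range N, wexp k q x j‖ / (N : ℝ)) atTop (𝓝 0)) :
    IsNormal q x := by
  intro m hm d hd
  have hq0 : (0:ℝ) < q := by exact_mod_cast (by omega : 0 < q)
  set f : ℕ → (Fin m → Fin q) → ℝ := fun N d => (((Finset.range N).filter fun n =>
          ∀ i : Fin m, qdigit q x (n + (i : ℕ)) = (d i : ℕ)).card : ℝ) / N with hf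
  have key := tendsto_of_lower f (fun _ => ((q : ℝ) ^ m)⁻¹) ?_ ?_ ?_ (fun i => ⟨d i, hd i⟩)
  · exact key
  · simp
    have : (q:ℝ) ^ m ≠ 0 := by positivity
    field_simp
  · intro N hN
    have hN0 : (N:ℝ) ≠ 0 := by positivity
    simp only [hf]
    rw [← Finset.sum_div, div_eq_one_iff_eq hN0, ← Nat.cast_sum]
    congr 1
    have := Finset.card_eq_sum_card_fiberwise (s := Finset.range N) (t := (Finset.univ : Finset (Fin m → Fin q)))
      (f := fun n => fun i : Fin m => (⟨qdigit q x (n + i), qdigit_lt q hq x _⟩ : Fin q)) (fun _ _ => by simp)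
    rw [Finset.card_range] at this
    refine Eq.trans ?_ this.symm
    apply Finset.sum_congr rfl
    intro d _
    congr 1
    ext n
    simp only [Finset.mem_filter, funext_iff, Fin.ext_iff]
  · intro d ε hε
    obtain ⟨D, hD, hI⟩ := qdigit_interval q hq m d
    have hu : ∀ k : ℕ, 1 ≤ k → Tendsto (fun N : ℕ => ‖∑ j ∈ Finset.range N, Complex.exp (Complex.I * ((2 * Real.pi * k * ((q:ℝ) ^ j * x) : ℝ) : ℂ))‖ / (N : ℝ)) atTop (𝓝 0) := by
      intro k hk
      refine (hw k hk).congr fun N => ?_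
      simp only [wexp, mul_assoc]
    have := equi_lower (fun j => (q:ℝ) ^ j * x) hu ((D:ℝ) / (q:ℝ) ^ m) ((D + 1 : ℝ) / (q:ℝ) ^ m) (by positivity)
      (by rw [div_le_one (by positivity)]; exact_mod_cast hD) ε hε
    filter_upwards [this] with N hN
    have e : ((D + 1 : ℝ) / (q:ℝ) ^ m) - ((D:ℝ) / (q:ℝ) ^ m) = ((q : ℝ) ^ m)⁻¹ := by ring
    rw [e] at hN
    refine hN.trans ?_
    simp only [hf]
    refine div_le_div_of_nonneg_right ?_ (by positivity)
    refine Nat.cast_le.2 (Finset.card_le_card ?_)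
    intro n hn
    rw [Finset.mem_filter] at hn ⊢
    refine ⟨hn.1, fun i => ?_⟩
    replace hn := hn.2
    rw [qdigit_shift q hq x hx]
    exact hI _ hn i

theorem irrational_of_weyl (x : ℝ)
    (hw : ∀ k : ℕ, 1 ≤ k → Tendsto (fun N : ℕ => ‖∑ j ∈ Finset.range N, wexp k 2 x j‖ / (N : ℝ)) atTop (𝓝 0)) :
    Irrational x := by
  rintro ⟨r, rfl⟩
  have h := hw r.den r.den_pos
  have h1 : ∀ j, wexp r.den 2 (r:ℝ) j = 1 := by
    intro j
    unfold wexp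
    have hd : (r.den : ℝ) * (r:ℝ) = r.num := by
      have := Rat.mul_den_eq_num r
      rw [mul_comm]; exact_mod_cast this
    have : (2 * Real.pi * (r.den:ℝ) * ((2:ℕ):ℝ) ^ j * (r:ℝ) : ℝ) = ((r.num * 2 ^ j : ℤ) : ℝ) * (2 * Real.pi) := by
      push_cast
      rw [← hd]; ring
    rw [this, Complex.exp_eq_one_iff]
    exact ⟨r.num * 2 ^ j, by push_cast; ring⟩
  simp only [h1] at h
  have h2 : Tendsto (fun N : ℕ => (1:ℝ)) atTop (𝓝 0) := by
    refine h.congr' ?_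
    filter_upwards [eventually_ge_atTop 1] with N hN
    have hN0 : (N:ℝ) ≠ 0 := by positivity
    simp [hN0]
  have := tendsto_nhds_unique h2 tendsto_const_nhds
  norm_num at this

end

section -- part D1

/-- prepend a letter -/
def ncons {ι : Type*} (i : ι) (b : ℕ → ι) : ℕ → ι
  | 0 => i
  | n + 1 => b n

/-- uniform measure on a finite type -/
noncomputable def unif (ι : Type*) [Fintype ι] [MeasurableSpace ι] : Measure ι :=
  ((Fintype.card ι : ℕ) : ℝ≥0∞)⁻¹ • ∑ i, Measure.dirac i

theorem unif_prob (ι : Type*) [Fintype ι] [Nonempty ι] [MeasurableSpace ι] : IsProbabilityMeasure (unif ι) := by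
  constructor
  simp only [unif, Measure.smul_apply, Measure.finsetSum_apply, smul_eq_mul, measure_univ, Finset.sum_const,
    Finset.card_univ, nsmul_eq_mul, mul_one]
  exact ENNReal.inv_mul_cancel (by simp) (by simp)

theorem measurable_ncons {ι : Type*} [MeasurableSpace ι] (i : ι) : Measurable (ncons i) := by
  rw [measurable_pi_iff]
  intro n
  cases n with
  | zero => exact measurable_const
  | succ n => exact measurable_pi_apply n

theorem coding_inv (ι : Type*) [Fintype ι] [Nonempty ι] [MeasurableSpace ι] :
    Measure.infinitePi (fun _ : ℕ => unif ι) =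
      ((Fintype.card ι : ℕ) : ℝ≥0∞)⁻¹ • ∑ i, (Measure.infinitePi (fun _ : ℕ => unif ι)).map (ncons i) := by
  have := unif_prob ι
  symm
  apply Measure.eq_infinitePi
  intro s t ht
  set t' : ℕ → Set ι := fun j => if j ∈ s then t j else Set.univ with ht'
  have mt' : ∀ j, MeasurableSet (t' j) := by
    intro j; simp only [ht']; split_ifs; exacts [ht j, MeasurableSet.univ]
  obtain ⟨n, hn⟩ : ∃ n, s ⊆ Finset.range (n + 1) := ⟨s.sup id, fun j hj => by
    rw [Finset.mem_range]; exact Nat.lt_succ_of_le (Finset.le_sup (f := id) hj)⟩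
  have e1 : Set.pi (s : Set ℕ) t = Set.pi (Finset.range (n+1) : Set ℕ) t' := by
    ext b
    simp only [Set.mem_pi, Finset.mem_coe, ht']
    constructor
    · intro h j _
      split_ifs with hj
      · exact h j hj
      · trivial
    · intro h j hj
      have := h j (hn hj)
      rwa [if_pos hj] at this
  have e2 : ∏ j ∈ s, unif ι (t j) = ∏ j ∈ Finset.range (n+1), unif ι (t' j) := by
    rw [← Finset.prod_subset hn (f := fun j => unif ι (t' j))]
    · apply Finset.prod_congr rfl
      intro j hj; simp only [ht', if_pos hj]
    · intro j _ hj
      simp only [ht', if_neg hj, measure_univ]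
  have mpi : MeasurableSet (Set.pi (Finset.range (n+1) : Set ℕ) t') :=
    MeasurableSet.pi (Finset.countable_toSet _) (fun j _ => mt' j)
  rw [e1, e2, Finset.prod_range_succ']
  simp only [Measure.smul_apply, Measure.finsetSum_apply, smul_eq_mul]
  have e3 : ∀ i, (Measure.infinitePi (fun _ : ℕ => unif ι)).map (ncons i) (Set.pi (Finset.range (n+1) : Set ℕ) t') =
      (∏ j ∈ Finset.range n, unif ι (t' (j+1))) * (t' 0).indicator 1 i := by
    intro i
    rw [Measure.map_apply (measurable_ncons i) mpi]
    by_cases hi : i ∈ t' 0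
    · have : ncons i ⁻¹' (Set.pi (Finset.range (n+1) : Set ℕ) t') = Set.pi (Finset.range n : Set ℕ) (fun j => t' (j+1)) := by
        ext b
        simp only [Set.mem_preimage, Set.mem_pi, Finset.mem_coe, Finset.mem_range]
        constructor
        · intro h j hj
          exact h (j+1) (by omega)
        · intro h j hj
          cases j with
          | zero => exact hi
          | succ j => exact h j (by omega)
      rw [this, Measure.infinitePi_pi _ (fun j _ => mt' _)]
      simp [hi]
    · have : ncons i ⁻¹' (Set.pi (Finset.range (n+1) : Set ℕ) t') = ∅ := by
        ext b
        simp only [Set.mem_preimage, Set.mem_pi, Finset.mem_coe, Finset.mem_range, Set.mem_empty_iff_false, iff_false]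
        intro h
        exact hi (h 0 (by omega))
      rw [this]; simp [hi]
  simp only [e3]
  rw [← Finset.mul_sum, mul_left_comm]
  congr 1
  simp only [unif, Measure.smul_apply, Measure.finsetSum_apply, smul_eq_mul, Measure.dirac_apply' _ (mt' 0)]

namespace Sys
variable {ι : Type*} [Fintype ι] {g : ι → Mat2} {X Y l c : ℝ}

noncomputable def pt (g : ι → Mat2) (n : ℕ) (b : ℕ → ι) : ℝ := mob (wmat g (fun j : Fin n => b j)) 0

theorem pt_mem (S : Sys g X Y l c) (n : ℕ) (b : ℕ → ι) : pt g n b ∈ Set.Icc (0:ℝ) 1 :=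
  ⟨(S.wgood _).mob_nonneg le_rfl, (S.wgood _).mob_le_one le_rfl zero_le_one⟩

theorem pt_succ (S : Sys g X Y l c) (n : ℕ) (b : ℕ → ι) (i : ι) :
    pt g (n+1) (ncons i b) = mob (g i) (pt g n b) := by
  unfold pt
  rw [← mob_mul (S.good i) (S.wgood _) le_rfl, ← wmat_cons]
  congr 2
  ext j
  refine Fin.cases ?_ (fun j => ?_) j <;> rfl

theorem pt_diff (S : Sys g X Y l c) (n : ℕ) (b : ℕ → ι) :
    dist (pt g n b) (pt g (n+1) b) ≤ 1 * (1/4) ^ n := by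
  have h : pt g (n+1) b = mob (wmat g (fun j : Fin n => b j)) (mob (g (b n)) 0) := by
    unfold pt
    rw [← mob_mul (S.wgood _) (S.good _) le_rfl, ← wmat_snoc]
    congr 2
    ext j
    refine Fin.lastCases ?_ (fun j => ?_) j <;> simp
  rw [h, Real.dist_eq]
  refine (S.mob_diff_le _ ⟨le_rfl, zero_le_one⟩ ⟨(S.good _).mob_nonneg le_rfl, (S.good _).mob_le_one le_rfl zero_le_one⟩).trans ?_
  have hX : 2 ≤ X := by linarith [S.hX, S.hY]
  rw [one_mul, one_div_pow, pow_mul]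
  have : (4:ℝ) ≤ X ^ 2 := by nlinarith
  gcongr

theorem pt_tendsto (S : Sys g X Y l c) (b : ℕ → ι) : ∃ x, Tendsto (fun n => pt g n b) atTop (𝓝 x) :=
  cauchySeq_tendsto_of_complete (cauchySeq_of_le_geometric (1/4) 1 (by norm_num) (S.pt_diff · b))

theorem exists_selfSim (S : Sys g X Y l c) (h01 : ∀ i, ∀ y ∈ Set.Icc (0:ℝ) 1, mob (g i) y ∈ Set.Ioo (0:ℝ) 1) :
    ∃ μ : Measure ℝ, SelfSim g μ := by
  let _ : MeasurableSpace ι := ⊤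
  have hne : Nonempty ι := by
    by_contra h
    rw [not_nonempty_iff] at h
    have := S.Mpos
    simp at this
  choose P hP using S.pt_tendsto
  have hPm : Measurable P := by
    refine measurable_of_tendsto_metrizable (f := fun n b => pt g n b) (fun n => ?_) (tendsto_pi_nhds.2 hP)
    have h1 : Measurable (fun b : ℕ → ι => fun j : Fin n => b j) := by
      rw [measurable_pi_iff]; intro j; exact measurable_pi_apply _
    have h2 : Measurable (fun w : Fin n → ι => mob (wmat g w) 0) := measurable_of_countable _
    exact h2.comp h1
  have hPI : ∀ b, P b ∈ Set.Icc (0:ℝ) 1 := fun b =>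
    isClosed_Icc.mem_of_tendsto (hP b) (Eventually.of_forall fun n => S.pt_mem n b)
  have hPc : ∀ i b, P (ncons i b) = mob (g i) (P b) := by
    intro i b
    have h1 := (hP (ncons i b)).comp (tendsto_add_atTop_nat 1)
    have h2 : Tendsto (fun n => mob (g i) (pt g n b)) atTop (𝓝 (mob (g i) (P b))) :=
      (mob_hasDerivAt (S.good i) (hPI b).1).continuousAt.tendsto.comp (hP b)
    refine tendsto_nhds_unique h1 (h2.congr fun n => ?_)
    exact (S.pt_succ n b i).symm
  have hb : ∀ b : ℕ → ι, b = ncons (b 0) (fun n => b (n+1)) := by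
    intro b; ext n; cases n <;> rfl
  have := unif_prob ι
  set Q := Measure.infinitePi (fun _ : ℕ => unif ι) with hQ
  refine ⟨Q.map P, Measure.isProbabilityMeasure_map hPm.aemeasurable, ?_, ?_⟩
  · refine (ae_map_iff hPm.aemeasurable (p := fun x => x ∈ Set.Ioo (0:ℝ) 1) measurableSet_Ioo).2 ?_
    refine Eventually.of_forall fun b => ?_
    rw [hb b, hPc]
    exact h01 _ _ (hPI _)
  · have e := coding_inv ι
    rw [← hQ] at e
    conv_lhs => rw [e]
    rw [Measure.map_smul, ← Measure.mapₗ_apply_of_measurable hPm, map_sum]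
    congr 1
    apply Finset.sum_congr rfl
    intro i _
    rw [Measure.mapₗ_apply_of_measurable hPm, Measure.map_map hPm (measurable_ncons i), Measure.map_map (mob_measurable _) hPm]
    congr 1
    ext b
    exact hPc i b

end Sys

end

section -- part D2

/-- the first `n` partial quotients lie in `A` -/
def Pcf (A : Set ℕ) (n : ℕ) (x : ℝ) : Prop := x ∈ Set.Ioo (0:ℝ) 1 ∧ ∀ j < n, cfa j x ∈ A

theorem cfa_meas (n : ℕ) : Measurable (cfa n) := by
  induction n with
  | zero => exact Nat.measurable_floor.comp measurable_inv
  | succ n ih =>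
    have : Measurable gaussMap := measurable_fract.comp measurable_inv
    exact ih.comp this

theorem Pcf_meas (A : Set ℕ) (n : ℕ) : MeasurableSet {x | Pcf A n x} := by
  have : {x | Pcf A n x} = Set.Ioo (0:ℝ) 1 ∩ ⋂ j, ⋂ (_ : j < n), cfa j ⁻¹' A := by
    ext x; simp [Pcf]
  rw [this]
  refine measurableSet_Ioo.inter (MeasurableSet.iInter fun j => MeasurableSet.iInter fun _ => ?_)
  exact cfa_meas j (Set.to_countable A).measurableSet

namespace Sys
variable {ι : Type*} [Fintype ι] {g : ι → Mat2} {X Y l c : ℝ}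

theorem ae_step {μ : Measure ℝ} (hμ : SelfSim g μ) {Q R : ℝ → Prop} (hQ : ∀ᵐ x ∂μ, Q x)
    (hR : MeasurableSet {x | R x}) (h : ∀ i y, Q y → R (mob (g i) y)) : ∀ᵐ x ∂μ, R x := by
  rw [ae_iff, hμ.inv]
  simp only [Measure.smul_apply, Measure.finsetSum_apply, smul_eq_mul]
  have : ∀ i, (μ.map (mob (g i))) {a | ¬ R a} = 0 := by
    intro i
    have : ∀ᵐ x ∂(μ.map (mob (g i))), R x := by
      rw [ae_map_iff (mob_measurable _).aemeasurable hR]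
      filter_upwards [hQ] with y hy using h i y hy
    exact this
  simp [this]

theorem ae_Pcf {μ : Measure ℝ} (hμ : SelfSim g μ) {A : Set ℕ}
    (hcf : ∀ i n y, Pcf A n y → Pcf A (n+1) (mob (g i) y)) (n : ℕ) : ∀ᵐ x ∂μ, Pcf A n x := by
  induction n with
  | zero =>
    filter_upwards [hμ.supp] with x hx
    exact ⟨hx, by simp⟩
  | succ n ih => exact ae_step hμ ih (Pcf_meas A _) (fun i y => hcf i n y)

theorem atom (S : Sys g X Y l c) {μ : Measure ℝ} (hμ : SelfSim g μ) (n : ℕ) (x : ℝ) :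
    μ {x} ≤ (((Fintype.card ι : ℕ) : ℝ≥0∞)⁻¹) ^ n := by
  have := hμ.prob
  induction n generalizing x with
  | zero => simpa using prob_le_one
  | succ n ih =>
    have e : μ {x} = ((Fintype.card ι : ℕ) : ℝ≥0∞)⁻¹ * ∑ i, μ (mob (g i) ⁻¹' {x}) := by
      conv_lhs => rw [hμ.inv]
      simp only [Measure.smul_apply, Measure.finsetSum_apply, smul_eq_mul]
      congr 1
      exact Finset.sum_congr rfl fun i _ => Measure.map_apply (mob_measurable _) (measurableSet_singleton x)
    have hsupp : ∀ s : Set ℝ, μ s = μ (s ∩ Set.Ioo 0 1) := by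
      intro s
      refine measure_congr ?_
      filter_upwards [hμ.supp] with z hz
      apply propext
      constructor
      · intro h; exact ⟨h, hz⟩
      · intro h; exact h.1
    rw [e, pow_succ']
    gcongr
    simp only [hsupp (mob _ ⁻¹' {x})]
    by_cases h : ∃ i, ∃ y ∈ Set.Ioo (0:ℝ) 1, mob (g i) y = x
    · obtain ⟨i, y, hy, rfl⟩ := h
      rw [Finset.sum_eq_single i]
      · refine le_trans (measure_mono (t := {y}) ?_) (ih y)
        rintro z ⟨hz, hz1⟩
        simp only [Set.mem_preimage, Set.mem_singleton_iff] at hz ⊢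
        rcases lt_trichotomy z y with h | h | h
        · have := mob_strict (S.good i) (S.det i) hz1.1.le h; linarith
        · exact h
        · have := mob_strict (S.good i) (S.det i) hy.1.le h; linarith
      · intro j _ hj
        convert measure_empty (μ := μ)
        rw [Set.eq_empty_iff_forall_notMem]
        rintro z ⟨hz, hz1⟩
        simp only [Set.mem_preimage, Set.mem_singleton_iff] at hz
        exact S.disj j i z y hj hz1.1 hz1.2 hy.1 hy.2 hz
      · simp
    · rw [Finset.sum_eq_zero]
      · simp
      intro i _
      convert measure_empty (μ := μ)
      rw [Set.eq_empty_iff_forall_notMem]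
      rintro z ⟨hz, hz1⟩
      exact h ⟨i, z, hz1, hz⟩

theorem noatom (S : Sys g X Y l c) {μ : Measure ℝ} (hμ : SelfSim g μ) (x : ℝ) : μ {x} = 0 := by
  have h2 : ((Fintype.card ι : ℕ) : ℝ≥0∞)⁻¹ < 1 := by
    have := S.card_ge
    have h : 1 < Fintype.card ι := by
      have hh : (1:ℝ) < Fintype.card ι := by nlinarith [S.hX, S.hY]
      exact_mod_cast hh
    rw [ENNReal.inv_lt_one]
    exact_mod_cast h
  have := ENNReal.tendsto_pow_atTop_nhds_zero_of_lt_one h2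
  exact le_antisymm (ge_of_tendsto' this fun n => S.atom hμ n x) bot_le

theorem infinite_normal (S : Sys g X Y l c)
    (h01 : ∀ i, ∀ y ∈ Set.Icc (0:ℝ) 1, mob (g i) y ∈ Set.Ioo (0:ℝ) 1) {A : Set ℕ}
    (hcf : ∀ i n y, Pcf A n y → Pcf A (n+1) (mob (g i) y)) :
    {x : ℝ | x ∈ cfRestricted A ∧ ∀ q : ℕ, 2 ≤ q → IsNormal q x}.Infinite := by
  obtain ⟨μ, hμ⟩ := S.exists_selfSim h01
  have := hμ.prob
  obtain ⟨C, η, hC, hη, hd⟩ := S.decay hμ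
  have hw : ∀ᵐ x ∂μ, ∀ k q : ℕ, 1 ≤ k → 2 ≤ q →
      Tendsto (fun N : ℕ => ‖∑ j ∈ Finset.range N, wexp k q x j‖ / (N : ℝ)) atTop (𝓝 0) := by
    rw [ae_all_iff]; intro k
    rw [ae_all_iff]; intro q
    by_cases h : 1 ≤ k ∧ 2 ≤ q
    · filter_upwards [weyl_ae μ C η hC hη hd k q h.1 h.2] with x hx _ _ using hx
    · exact Eventually.of_forall fun x h1 h2 => absurd ⟨h1, h2⟩ h
  have hP : ∀ᵐ x ∂μ, ∀ n, Pcf A n x := by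
    rw [ae_all_iff]; exact ae_Pcf hμ hcf
  have hG : ∀ᵐ x ∂μ, x ∈ {x : ℝ | x ∈ cfRestricted A ∧ ∀ q : ℕ, 2 ≤ q → IsNormal q x} := by
    filter_upwards [hw, hP] with x h1 h2
    refine ⟨⟨(h2 0).1, irrational_of_weyl x fun k hk => h1 k 2 hk le_rfl, fun i => (h2 (i+1)).2 i (by omega)⟩, ?_⟩
    intro q hq
    exact normal_of_weyl q hq x (h2 0).1.1.le fun k hk => h1 k q hk hq
  intro hfin
  have h0 : μ {x : ℝ | x ∈ cfRestricted A ∧ ∀ q : ℕ, 2 ≤ q → IsNormal q x} = 0 := by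
    rw [← Set.biUnion_of_singleton {x : ℝ | x ∈ cfRestricted A ∧ ∀ q : ℕ, 2 ≤ q → IsNormal q x}]
    rw [measure_biUnion_null_iff hfin.countable]
    intro x _
    exact S.noatom hμ x
  have h1 : μ Set.univ = 0 := by
    rw [← nonpos_iff_eq_zero, ← h0]
    exact measure_mono_ae (by filter_upwards [hG] with x hx _ using hx)
  simp at h1

end Sys

end

section -- part E1

/-- matrix of a continued fraction digit -/
noncomputable def Lm (a : ℕ) : Mat2 := !![0, 1; 1, (a:ℝ)]

/-- matrix of a word of digits -/
noncomputable def wm {A : Finset ℕ} {N : ℕ} (w : Fin N → A) : Mat2 := wmat (fun a : A => Lm a) w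

theorem Lm_good {a : ℕ} (ha : 1 ≤ a) : Good (Lm a) := by
  have h : (1:ℝ) ≤ a := by exact_mod_cast ha
  constructor <;> simp [Lm] <;> linarith

theorem Lm_mob (a : ℕ) (y : ℝ) : mob (Lm a) y = 1 / (a + y) := by
  simp [mob, Lm, add_comm]

theorem Lm_transpose (a : ℕ) : (Lm a).transpose = Lm a := by
  ext i j; fin_cases i <;> fin_cases j <;> simp [Lm]

theorem wm_cons {A : Finset ℕ} {N : ℕ} (a : A) (w : Fin N → A) :
    wm (Fin.cons a w : Fin (N+1) → A) = Lm a * wm w := wmat_cons _ a w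

theorem wm_snoc {A : Finset ℕ} {N : ℕ} (w : Fin N → A) (a : A) :
    wm (Fin.snoc w a : Fin (N+1) → A) = wm w * Lm a := wmat_snoc _ w a

section
variable {A : Finset ℕ}

theorem wm_good (hA : ∀ a ∈ A, 1 ≤ a) : ∀ {N : ℕ} (w : Fin N → A), Good (wm w) := by
  intro N
  induction N with
  | zero => intro w; simpa [wm, wmat_zero] using Good.id
  | succ N ih =>
    intro w
    refine Fin.consCases (fun a v => ?_) w
    rw [wm_cons]
    exact (Lm_good (hA a a.2)).mul (ih v)

theorem wm_det : ∀ {N : ℕ} (w : Fin N → A), (wm w).det = (-1) ^ N := by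
  intro N
  induction N with
  | zero => intro w; simp [wm, wmat_zero]
  | succ N ih =>
    intro w
    refine Fin.consCases (fun a v => ?_) w
    rw [wm_cons, Matrix.det_mul, ih v, pow_succ']
    simp [Lm, Matrix.det_fin_two]

theorem wm_mob_cons (hA : ∀ a ∈ A, 1 ≤ a) {N : ℕ} (a : A) (w : Fin N → A) {y : ℝ} (hy : 0 ≤ y) :
    mob (wm (Fin.cons a w : Fin (N+1) → A)) y = 1 / (a + mob (wm w) y) := by
  rw [wm_cons, mob_mul (Lm_good (hA a a.2)) (wm_good hA w) hy, Lm_mob]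

theorem wm_mobT_snoc (hA : ∀ a ∈ A, 1 ≤ a) {N : ℕ} (w : Fin N → A) (a : A) {y : ℝ} (hy : 0 ≤ y) :
    mob (wm (Fin.snoc w a : Fin (N+1) → A)).transpose y = 1 / (a + mob (wm w).transpose y) := by
  rw [wm_snoc, Matrix.transpose_mul, mob_mul (Lm_good (hA a a.2)).transpose (wm_good hA w).transpose hy, Lm_transpose, Lm_mob]

theorem wm_low (hA : ∀ a ∈ A, 1 ≤ a) {K : ℕ} (hK : ∀ a ∈ A, a ≤ K) {N : ℕ} (hN : 1 ≤ N) (w : Fin N → A)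
    {s : ℝ} (h0 : 0 ≤ s) (h1 : s ≤ 1) : 1 / ((K:ℝ) + 1) ≤ mob (wm w).transpose s := by
  obtain ⟨N, rfl⟩ : ∃ n, N = n + 1 := ⟨N - 1, by omega⟩
  refine Fin.snocCases (fun v a => ?_) w
  rw [wm_mobT_snoc hA _ _ h0]
  have g := (wm_good hA v).transpose
  have h2 := g.mob_nonneg h0
  have h3 := g.mob_le_one h0 h1
  have h4 : (1:ℝ) ≤ (a:ℕ) := by exact_mod_cast hA a a.2
  have h5 : ((a:ℕ):ℝ) ≤ K := by exact_mod_cast hK a a.2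
  apply one_div_le_one_div_of_le <;> linarith

theorem wm_sep (hA : ∀ a ∈ A, 1 ≤ a) {K : ℕ} (hK : ∀ a ∈ A, a ≤ K) {N : ℕ} (v w : Fin N → A)
    {s s' : ℝ} (hvw : v ≠ w) (h0 : 0 ≤ s) (h1 : s ≤ 1) (h0' : 0 ≤ s') (h1' : s' ≤ 1)
    (hs : |s - s'| ≤ 1 - 1 / ((K:ℝ) + 1)) :
    (1 / ((K:ℝ) + 1)) ^ (2 * N + 1) ≤ |mob (wm v).transpose s - mob (wm w).transpose s'| := by
  have hl : 0 < 1 / ((K:ℝ) + 1) := by positivity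
  have hl1 : 1 / ((K:ℝ) + 1) ≤ 1 := by
    rw [div_le_one (by positivity)]; linarith [(Nat.cast_nonneg K : (0:ℝ) ≤ K)]
  set l := 1 / ((K:ℝ) + 1) with hldef
  induction N with
  | zero => exact absurd (Subsingleton.elim v w) hvw
  | succ N ih =>
    revert hvw
    refine Fin.snocCases (fun v a => ?_) v
    refine Fin.snocCases (fun w b => ?_) w
    intro hvw
    rw [wm_mobT_snoc hA _ _ h0, wm_mobT_snoc hA _ _ h0']
    set θ := mob (wm v).transpose s with hθ
    set θ' := mob (wm w).transpose s' with hθ'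
    have g := (wm_good hA v).transpose
    have t0 : 0 ≤ θ := g.mob_nonneg h0
    have t1 : θ ≤ 1 := g.mob_le_one h0 h1
    have g' := (wm_good hA w).transpose
    have t0' : 0 ≤ θ' := g'.mob_nonneg h0'
    have t1' : θ' ≤ 1 := g'.mob_le_one h0' h1'
    have h4 : (1:ℝ) ≤ (a:ℕ) := by exact_mod_cast hA a a.2
    have h5 : ((a:ℕ):ℝ) ≤ K := by exact_mod_cast hK a a.2
    have h4' : (1:ℝ) ≤ (b:ℕ) := by exact_mod_cast hA b b.2
    have h5' : ((b:ℕ):ℝ) ≤ K := by exact_mod_cast hK b b.2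
    have key : l ^ (2 * N + 1) ≤ |((b:ℕ):ℝ) + θ' - ((a:ℕ) + θ)| := by
      by_cases hab : a = b
      · subst hab
        have hne : v ≠ w := by rintro rfl; exact hvw rfl
        have := ih v w hne
        rw [abs_sub_comm] at this
        rwa [show ((a:ℕ):ℝ) + θ' - ((a:ℕ) + θ) = θ' - θ by ring]
      · have hd : |θ - θ'| ≤ 1 - l := by
          rcases Nat.eq_zero_or_pos N with hN | hN
          · subst hN
            have e1 : θ = s := by simp [hθ, wm, wmat_zero, mob]
            have e2 : θ' = s' := by simp [hθ', wm, wmat_zero, mob]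
            rw [e1, e2]; exact hs
          · have l1 := wm_low hA hK hN v h0 h1
            have l2 := wm_low hA hK hN w h0' h1'
            rw [abs_le]; constructor <;> linarith
        have hab' : (1:ℝ) ≤ |((b:ℕ):ℝ) - (a:ℕ)| := by
          have : (1:ℤ) ≤ |((b:ℕ):ℤ) - (a:ℕ)| := by
            apply Int.one_le_abs
            intro h
            apply hab
            apply Subtype.ext
            omega
          exact_mod_cast this
        have : |((b:ℕ):ℝ) - (a:ℕ)| ≤ |((b:ℕ):ℝ) + θ' - ((a:ℕ) + θ)| + |θ - θ'| := by
          rw [show ((b:ℕ):ℝ) - (a:ℕ) = (((b:ℕ):ℝ) + θ' - ((a:ℕ) + θ)) + (θ - θ') by ring]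
          exact abs_add_le _ _
        have hp : l ^ (2 * N + 1) ≤ l := by
          have := pow_le_pow_of_le_one hl.le hl1 (show 1 ≤ 2 * N + 1 by omega)
          simpa using this
        linarith
    have p1 : 0 < ((a:ℕ):ℝ) + θ := by linarith
    have p2 : 0 < ((b:ℕ):ℝ) + θ' := by linarith
    have e : 1 / (((a:ℕ):ℝ) + θ) - 1 / (((b:ℕ):ℝ) + θ') =
      (((b:ℕ):ℝ) + θ' - ((a:ℕ) + θ)) * (1 / (((a:ℕ):ℝ) + θ) * (1 / (((b:ℕ):ℝ) + θ'))) := by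
      field_simp
    rw [e, abs_mul, abs_of_pos (by positivity : 0 < 1 / (((a:ℕ):ℝ) + θ) * (1 / (((b:ℕ):ℝ) + θ')))]
    have q1 : l ≤ 1 / (((a:ℕ):ℝ) + θ) := one_div_le_one_div_of_le p1 (by linarith)
    have q2 : l ≤ 1 / (((b:ℕ):ℝ) + θ') := one_div_le_one_div_of_le p2 (by linarith)
    rw [show l ^ (2 * (N+1) + 1) = l ^ (2 * N + 1) * (l * l) by ring]
    gcongr

theorem wm_Ioo (hA : ∀ a ∈ A, 1 ≤ a) {N : ℕ} (w : Fin N → A) {y : ℝ} (hy : y ∈ Set.Ioo (0:ℝ) 1) :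
    mob (wm w) y ∈ Set.Ioo (0:ℝ) 1 := by
  induction N with
  | zero => simpa [wm, wmat_zero, mob] using hy
  | succ N ih =>
    refine Fin.consCases (fun a v => ?_) w
    rw [wm_mob_cons hA _ _ hy.1.le]
    have h := ih v
    have h4 : (1:ℝ) ≤ (a:ℕ) := by exact_mod_cast hA a a.2
    refine ⟨by have := h.1; positivity, ?_⟩
    rw [div_lt_one (by linarith [h.1])]; linarith [h.1]

theorem wm_h01 (hA : ∀ a ∈ A, 1 ≤ a) {N : ℕ} (hN : 2 ≤ N) (w : Fin N → A) {y : ℝ} (hy : y ∈ Set.Icc (0:ℝ) 1) :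
    mob (wm w) y ∈ Set.Ioo (0:ℝ) 1 := by
  obtain ⟨N, rfl⟩ : ∃ n, N = n + 1 + 1 := ⟨N - 2, by omega⟩
  refine Fin.consCases (fun a v => ?_) w
  refine Fin.consCases (fun b v => ?_) v
  rw [wm_mob_cons hA _ _ hy.1, wm_mob_cons hA _ _ hy.1]
  have h := (wm_good hA v).mob_nonneg hy.1
  have h4 : (1:ℝ) ≤ (a:ℕ) := by exact_mod_cast hA a a.2
  have h4' : (1:ℝ) ≤ (b:ℕ) := by exact_mod_cast hA b b.2
  have h5 : 0 < 1 / (((b:ℕ):ℝ) + mob (wm v) y) := by positivity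
  refine ⟨by positivity, ?_⟩
  rw [div_lt_one (by linarith)]; linarith

theorem wm_disj (hA : ∀ a ∈ A, 1 ≤ a) {N : ℕ} (v w : Fin N → A) {y y' : ℝ} (hvw : v ≠ w)
    (hy : y ∈ Set.Ioo (0:ℝ) 1) (hy' : y' ∈ Set.Ioo (0:ℝ) 1) : mob (wm v) y ≠ mob (wm w) y' := by
  induction N with
  | zero => exact absurd (Subsingleton.elim v w) hvw
  | succ N ih =>
    revert hvw
    refine Fin.consCases (fun a v => ?_) v
    refine Fin.consCases (fun b w => ?_) w
    intro hvw h
    rw [wm_mob_cons hA _ _ hy.1.le, wm_mob_cons hA _ _ hy'.1.le] at h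
    have i1 := wm_Ioo hA v hy
    have i2 := wm_Ioo hA w hy'
    have h4 : (1:ℝ) ≤ (a:ℕ) := by exact_mod_cast hA a a.2
    have h4' : (1:ℝ) ≤ (b:ℕ) := by exact_mod_cast hA b b.2
    have h' : ((a:ℕ):ℝ) + mob (wm v) y = (b:ℕ) + mob (wm w) y' := by
      have := congrArg (fun x => x⁻¹) h
      simpa using this
    have hab : (a:ℕ) = (b:ℕ) := by
      have k1 : ((a:ℕ):ℝ) < (b:ℕ) + 1 := by linarith [i1.1, i2.2]
      have k2 : ((b:ℕ):ℝ) < (a:ℕ) + 1 := by linarith [i1.2, i2.1]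
      have k1' : (a:ℕ) < (b:ℕ) + 1 := by exact_mod_cast k1
      have k2' : (b:ℕ) < (a:ℕ) + 1 := by exact_mod_cast k2
      omega
    have hab' : a = b := Subtype.ext hab
    subst hab'
    have hne : v ≠ w := by rintro rfl; exact hvw rfl
    exact ih v w hne (by linarith)

theorem Pcf_letter {a : ℕ} (ha : 1 ≤ a) (haA : a ∈ A) {n : ℕ} {y : ℝ} (h : Pcf (A : Set ℕ) n y) :
    Pcf (A : Set ℕ) (n+1) (1 / (a + y)) := by
  obtain ⟨⟨h0, h1⟩, h2⟩ := h
  have h4 : (1:ℝ) ≤ a := by exact_mod_cast ha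
  refine ⟨⟨by positivity, ?_⟩, ?_⟩
  · rw [div_lt_one (by linarith)]; linarith
  · intro j hj
    have e : (1 / ((a:ℝ) + y))⁻¹ = a + y := by simp
    cases j with
    | zero =>
      have : cfa 0 (1 / (a + y)) = a := by
        rw [cfa, e, Nat.floor_eq_iff (by linarith)]
        constructor <;> linarith
      rw [this]; exact haA
    | succ j =>
      have : gaussMap (1 / (a + y)) = y := by
        rw [gaussMap, e, Int.fract_natCast_add, Int.fract_eq_self.2 ⟨h0.le, h1⟩]
      rw [cfa, this]
      exact h2 j (by omega)

theorem wm_Pcf (hA : ∀ a ∈ A, 1 ≤ a) {N : ℕ} (w : Fin N → A) {n : ℕ} {y : ℝ} (h : Pcf (A : Set ℕ) n y) :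
    Pcf (A : Set ℕ) (n+N) (mob (wm w) y) := by
  induction N with
  | zero => simpa [wm, wmat_zero, mob] using h
  | succ N ih =>
    refine Fin.consCases (fun a v => ?_) w
    rw [wm_mob_cons hA _ _ h.1.1.le]
    exact Pcf_letter (hA a a.2) a.2 (ih v)

theorem mul11 {g k : Mat2} (hg : Good g) (hk : Good k) :
    g 1 1 * k 1 1 ≤ (g * k) 1 1 ∧ (g * k) 1 1 ≤ (g 1 0 + g 1 1) * k 1 1 := by
  rw [Matrix.mul_apply, Fin.sum_univ_two]
  constructor
  · linarith [mul_nonneg hg.n10 hk.n01]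
  · nlinarith [hk.h01, hg.n10, mul_le_mul_of_nonneg_left hk.h01 hg.n10]

theorem wm_le (hA : ∀ a ∈ A, 1 ≤ a) {K : ℕ} (hK : ∀ a ∈ A, a ≤ K) {N : ℕ} (w : Fin N → A) :
    wm w 1 1 ≤ ((K:ℝ) + 1) ^ N := by
  induction N with
  | zero => simp [wm, wmat_zero]
  | succ N ih =>
    refine Fin.consCases (fun a v => ?_) w
    rw [wm_cons, pow_succ']
    refine (mul11 (Lm_good (hA a a.2)) (wm_good hA v)).2.trans ?_
    have h5 : ((a:ℕ):ℝ) ≤ K := by exact_mod_cast hK a a.2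
    have := (wm_good hA v).one
    refine mul_le_mul ?_ (ih v) (by linarith) (by positivity)
    simp [Lm]; linarith

theorem wm_ge (hA : ∀ a ∈ A, 1 ≤ a) {m : ℕ} (w : Fin (2 * m) → A) :
    2 ^ m ≤ wm w 1 1 := by
  induction m with
  | zero => simp [wm, wmat_zero]
  | succ N ih =>
    change Fin (2 * N + 1 + 1) → A at w
    change 2 ^ (N+1) ≤ wm (N := 2 * N + 1 + 1) w 1 1
    refine Fin.consCases (fun a v => ?_) w
    refine Fin.consCases (fun b v => ?_) v
    rw [wm_cons, wm_cons, ← mul_assoc, pow_succ']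
    have ga := Lm_good (hA a a.2)
    have gb := Lm_good (hA b b.2)
    refine le_trans ?_ (mul11 (ga.mul gb) (wm_good hA v)).1
    have h4 : (1:ℝ) ≤ (a:ℕ) := by exact_mod_cast hA a a.2
    have h4' : (1:ℝ) ≤ (b:ℕ) := by exact_mod_cast hA b b.2
    have : (2:ℝ) ≤ (Lm a * Lm b) 1 1 := by
      rw [Matrix.mul_apply, Fin.sum_univ_two]
      simp [Lm]; nlinarith
    have := ih v
    gcongr

end

end

section -- part E2

theorem infinite_of_Z {A : Finset ℕ} (hA : ∀ a ∈ A, 1 ≤ a) {σ c0 : ℝ} (hσ : 0 < σ) (hc0 : 0 < c0)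
    (hZ : ∀ᶠ m : ℕ in atTop, c0 ≤ ∑ w : Fin (2 * m) → A, (wm w 1 1) ^ (-(1 + σ))) :
    {x : ℝ | x ∈ cfRestricted (A : Set ℕ) ∧ ∀ q : ℕ, 2 ≤ q → IsNormal q x}.Infinite := by
  obtain ⟨K, hK⟩ : ∃ K, ∀ a ∈ A, a ≤ K := ⟨A.sup id, fun a ha => Finset.le_sup (f := id) ha⟩
  obtain ⟨r0, hr0⟩ := exists_nat_ge (11 / σ)
  set r := r0 + 2 with hr
  have hrσ : 11 ≤ (r:ℝ) * σ := by
    have : 11 ≤ (r0:ℝ) * σ := by rwa [div_le_iff₀ hσ] at hr0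
    rw [hr]; push_cast; nlinarith
  set J : ℕ := 2 * r * K + 1 with hJ
  have hJ0 : (0:ℝ) < J := by rw [hJ]; positivity
  -- choose n
  obtain ⟨N0, hN0⟩ := eventually_atTop.1 hZ
  obtain ⟨n0, hn0⟩ := pow_unbounded_of_one_lt (2 ^ 10 * J / c0) (one_lt_two : (1:ℝ) < 2)
  set n := n0 + N0 + 1 with hn
  have hn1 : 1 ≤ n := by omega
  have hnb : 2 ^ 10 * J ≤ c0 * 2 ^ n := by
    have : (2:ℝ) ^ n0 ≤ 2 ^ n := pow_le_pow_right₀ (by norm_num) (by omega)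
    rw [div_lt_iff₀ hc0] at hn0
    nlinarith
  set N := 2 * (r * n) with hN
  have hNN : N0 ≤ r * n := by
    have : n ≤ r * n := Nat.le_mul_of_pos_left n (by omega)
    omega
  have hN2 : 2 ≤ N := by
    have : n ≤ r * n := Nat.le_mul_of_pos_left n (by omega)
    omega
  have hs := hN0 (r * n) hNN
  have hq1 : ∀ w : Fin N → A, (2:ℝ) ^ (r * n) ≤ wm w 1 1 := fun w => wm_ge hA w
  have hq0 : ∀ w : Fin N → A, (0:ℝ) < wm w 1 1 := fun w => lt_of_lt_of_le (by positivity) (hq1 w)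
  have hq2 : ∀ w : Fin N → A, wm w 1 1 ≤ (2:ℝ) ^ (2 * r * K * n) := by
    intro w
    refine (wm_le hA hK w).trans ?_
    have : (K:ℝ) + 1 ≤ 2 ^ K := by exact_mod_cast Nat.lt_two_pow_self
    calc ((K:ℝ) + 1) ^ N ≤ (2 ^ K) ^ N := by gcongr
      _ = _ := by rw [← pow_mul]; congr 1; rw [hN]; ring
  -- classes
  have hcl : ∀ w : Fin N → A, ∃ j : ℕ, (2:ℝ) ^ (j * n) ≤ wm w 1 1 ∧ wm w 1 1 ≤ 2 ^ ((j + 1) * n) ∧ r ≤ j ∧ j < J := by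
    intro w
    obtain ⟨j, hj1, hj2⟩ := exists_nat_pow_near (y := (2:ℝ) ^ n) (x := wm w 1 1) (wm_good hA w).one
      (one_lt_pow₀ (by norm_num) (by omega))
    have hj1' : (2:ℝ) ^ (j * n) ≤ wm w 1 1 := by rwa [mul_comm, pow_mul]
    have hj2' : wm w 1 1 < (2:ℝ) ^ ((j+1) * n) := by rwa [mul_comm, pow_mul]
    refine ⟨j, hj1', hj2'.le, ?_, ?_⟩
    · have := lt_of_le_of_lt (hq1 w) hj2'
      rw [pow_lt_pow_iff_right₀ (by norm_num)] at this
      have := Nat.lt_of_mul_lt_mul_right this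
      omega
    · have := le_trans hj1' (hq2 w)
      rw [pow_le_pow_iff_right₀ (by norm_num)] at this
      have := Nat.le_of_mul_le_mul_right this (by omega)
      omega
  choose cl h1 h2 h3 h4 using hcl
  obtain ⟨j, hjJ, hj⟩ := Finset.exists_le_sum_fiber_of_maps_to_of_nsmul_le_sum (s := (Finset.univ : Finset (Fin N → A)))
    (t := Finset.range J) (f := cl) (w := fun w => (wm w 1 1) ^ (-(1 + σ))) (b := c0 / J)
    (fun w _ => Finset.mem_range.2 (h4 w)) ⟨0, by simp [hJ]⟩ (by
      rw [Finset.card_range, nsmul_eq_mul]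
      refine le_trans (le_of_eq ?_) hs
      field_simp)
  have hne : ∃ w : Fin N → A, cl w = j := by
    by_contra hcon
    push Not at hcon
    rw [Finset.filter_false_of_mem (fun w _ => hcon w), Finset.sum_empty] at hj
    have : 0 < c0 / J := by positivity
    linarith
  obtain ⟨w0, hw0⟩ := hne
  have hrj : r ≤ j := hw0 ▸ h3 w0
  set X : ℝ := 2 ^ (j * n) with hX
  set Y : ℝ := 2 ^ (n + 1) with hY
  have hX0 : 0 < X := by positivity
  have hcard : X * Y ^ 10 ≤ (Fintype.card {w : Fin N → A // cl w = j} : ℝ) := by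
    rw [Fintype.card_subtype]
    set B := Finset.univ.filter fun w : Fin N → A => cl w = j with hB
    have hb : c0 / J ≤ (B.card : ℝ) * X ^ (-(1 + σ)) := by
      refine hj.trans ?_
      rw [← nsmul_eq_mul]
      apply Finset.sum_le_card_nsmul
      intro w hw
      have : cl w = j := by simpa [hB] using hw
      apply Real.rpow_le_rpow_of_nonpos hX0 _ (by linarith)
      rw [hX, ← this]; exact h1 w
    have hXs : (2:ℝ) ^ (11 * n) ≤ X ^ σ := by
      have h11 : (2:ℝ) ^ (11 * n) = (2:ℝ) ^ ((11 * n : ℕ) : ℝ) := by rw [Real.rpow_natCast]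
      rw [h11, hX, ← Real.rpow_natCast, ← Real.rpow_mul (by norm_num)]
      apply Real.rpow_le_rpow_of_exponent_le (by norm_num)
      push_cast
      have : (r:ℝ) ≤ j := by exact_mod_cast hrj
      have hn' : (0:ℝ) ≤ n := by positivity
      have : 11 ≤ (j:ℝ) * σ := by nlinarith
      nlinarith
    have hbX : c0 / J * (X * X ^ σ) ≤ B.card := by
      have e : X ^ (-(1 + σ)) * (X * X ^ σ) = 1 := by
        rw [Real.rpow_neg hX0.le, Real.rpow_add hX0, Real.rpow_one]
        have : 0 < X ^ σ := Real.rpow_pos_of_pos hX0 σ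
        field_simp
      calc c0 / J * (X * X ^ σ) ≤ (B.card : ℝ) * X ^ (-(1 + σ)) * (X * X ^ σ) := by gcongr
        _ = B.card := by rw [mul_assoc, e, mul_one]
    refine le_trans ?_ hbX
    have hY10 : Y ^ 10 = 2 ^ 10 * (2 ^ (10 * n)) := by rw [hY]; ring
    have e11 : (2:ℝ) ^ (11 * n) = 2 ^ n * 2 ^ (10 * n) := by rw [← pow_add]; congr 1; ring
    have : Y ^ 10 ≤ c0 / J * X ^ σ := by
      calc Y ^ 10 = 2 ^ 10 * J * (2 ^ (10 * n)) / J := by rw [hY10]; field_simp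
        _ ≤ c0 * 2 ^ n * (2 ^ (10 * n)) / J := by gcongr
        _ = c0 / J * 2 ^ (11 * n) := by rw [e11]; ring
        _ ≤ _ := by gcongr
    nlinarith
  have S : Sys (fun w : {w : Fin N → A // cl w = j} => wm w.1) X Y (1 / ((K:ℝ) + 1)) ((1 / ((K:ℝ) + 1)) ^ (2 * N + 1)) := by
    refine ⟨fun w => wm_good hA _, fun w => ?_, fun w => ?_, fun w => ?_, ?_, ?_, hcard, by positivity, ?_, ?_, ?_, ?_⟩
    · rw [wm_det, hN, pow_mul]; norm_num
    · have := h1 w.1; rw [w.2] at this; exact this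
    · have := h2 w.1; rw [w.2] at this
      have e : X * Y = 2 * 2 ^ ((j+1) * n) := by rw [hX, hY]; ring
      rw [e]; linarith
    · rw [hY]
      calc (2:ℝ) = 2 ^ 1 := by norm_num
        _ ≤ 2 ^ (n+1) := pow_le_pow_right₀ (by norm_num) (by omega)
    · refine pow_le_pow_right₀ (by norm_num) ?_
      have : 2 * n ≤ j * n := Nat.mul_le_mul_right n (by omega)
      omega
    · intro w s hs0 hs1
      exact wm_low hA hK (by omega) w.1 hs0 hs1
    · rw [div_le_one (by positivity)]; linarith [(Nat.cast_nonneg K : (0:ℝ) ≤ K)]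
    · intro v w s s' hvw a b c d e
      exact wm_sep hA hK v.1 w.1 (fun h => hvw (Subtype.ext h)) a b c d e
    · intro v w y y' hvw a b c d
      exact wm_disj hA v.1 w.1 (fun h => hvw (Subtype.ext h)) ⟨a, b⟩ ⟨c, d⟩
  refine S.infinite_normal (fun w y hy => wm_h01 hA hN2 w.1 hy) ?_
  intro w m y h
  have := wm_Pcf hA w.1 h
  exact ⟨this.1, fun i hi => this.2 i (by omega)⟩

end

section -- part F1

theorem den_snoc {A : Finset ℕ} (hA : ∀ a ∈ A, 1 ≤ a) {N : ℕ} (w : Fin N → A) (a : A) {x : ℝ} (hx : 0 ≤ x) :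
    wm (Fin.snoc w a : Fin (N+1) → A) 1 0 * x + wm (Fin.snoc w a : Fin (N+1) → A) 1 1 =
      (wm w 1 0 * (1 / (((a:ℕ):ℝ) + x)) + wm w 1 1) * (((a:ℕ):ℝ) + x) := by
  have h4 : (1:ℝ) ≤ (a:ℕ) := by exact_mod_cast hA a a.2
  have : ((a:ℕ):ℝ) + x ≠ 0 := by linarith
  rw [wm_snoc]
  simp only [Matrix.mul_apply, Fin.sum_univ_two]
  simp [Lm]
  field_simp
  ring

theorem transfer {A : Finset ℕ} (hA : ∀ a ∈ A, 1 ≤ a) (s : ℝ) (f : ℝ → ℝ)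
    (hf : ∀ x ∈ Set.Icc (0:ℝ) 1, f x ≤ ∑ a : A, (((a:ℕ):ℝ) + x) ^ (-s) * f (1 / (((a:ℕ):ℝ) + x))) (N : ℕ) :
    ∀ x ∈ Set.Icc (0:ℝ) 1, f x ≤ ∑ w : Fin N → A, (wm w 1 0 * x + wm w 1 1) ^ (-s) * f (mob (wm w) x) := by
  induction N with
  | zero => intro x hx; simp [wm, wmat_zero, mob]
  | succ N ih =>
    intro x hx
    rw [sum_snoc]
    refine (hf x hx).trans (Finset.sum_le_sum fun a _ => ?_)
    have h4 : (1:ℝ) ≤ (a:ℕ) := by exact_mod_cast hA a a.2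
    have hp : 0 < ((a:ℕ):ℝ) + x := by linarith [hx.1]
    have hy : 1 / (((a:ℕ):ℝ) + x) ∈ Set.Icc (0:ℝ) 1 :=
      ⟨by positivity, by rw [div_le_one hp]; linarith [hx.1]⟩
    have := mul_le_mul_of_nonneg_left (ih _ hy) (Real.rpow_nonneg hp.le (-s))
    refine this.trans (le_of_eq ?_)
    rw [Finset.mul_sum]
    apply Finset.sum_congr rfl
    intro w _
    have e : mob (wm (Fin.snoc w a : Fin (N+1) → A)) x = mob (wm w) (1 / (((a:ℕ):ℝ) + x)) := by
      rw [wm_snoc, mob_mul (wm_good hA w) (Lm_good (hA a a.2)) hx.1, Lm_mob]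
    rw [den_snoc hA w a hx.1, Real.mul_rpow ((wm_good hA w).den_pos hy.1).le hp.le, e]
    ring

theorem Z_one_two : ∃ σ c0 : ℝ, 0 < σ ∧ 0 < c0 ∧
    ∀ᶠ m : ℕ in atTop, c0 ≤ ∑ w : Fin (2 * m) → ({1, 2} : Finset ℕ), (wm w 1 1) ^ (-(1 + σ)) := by
  refine ⟨1/50, 1, by norm_num, by norm_num, Eventually.of_forall fun m => ?_⟩
  generalize 2 * m = N
  have hA : ∀ a ∈ ({1, 2} : Finset ℕ), 1 ≤ a := by decide
  set f : ℝ → ℝ := fun x => 1 / (x + 1.8) with hf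
  have h3 : (3:ℝ) ^ ((1:ℝ)/50) ≤ 1.03 := by
    have e : ((1.03:ℝ) ^ (50:ℕ)) ^ ((1:ℝ)/50) = 1.03 := by
      have := Real.pow_rpow_inv_natCast (x := (1.03:ℝ)) (n := 50) (by norm_num) (by norm_num)
      rw [one_div]; exact_mod_cast this
    rw [← e]
    exact Real.rpow_le_rpow (by norm_num) (by norm_num) (by norm_num)
  have key := transfer hA (1 + 1/50) f (by
    intro x hx
    have hx0 := hx.1
    have hx1 := hx.2
    have aux : ∀ a : ℝ, 1 ≤ a → a ≤ 2 →
        1 / 1.03 * (1 / (1 + 1.8 * (a + x))) ≤ (a + x) ^ (-(1 + 1/50 : ℝ)) * f (1 / (a + x)) := by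
      intro a h1 h2
      have hp : 0 < a + x := by linarith
      have e : (a + x) ^ (-(1 + 1/50 : ℝ)) = (a + x)⁻¹ * ((a + x) ^ ((1:ℝ)/50))⁻¹ := by
        rw [Real.rpow_neg hp.le, Real.rpow_add hp, Real.rpow_one, mul_inv]
      have h5 : (a + x) ^ ((1:ℝ)/50) ≤ 1.03 :=
        (Real.rpow_le_rpow hp.le (by linarith) (by norm_num)).trans h3
      have h6 : 1 / 1.03 ≤ ((a + x) ^ ((1:ℝ)/50))⁻¹ := by
        rw [← one_div]
        exact one_div_le_one_div_of_le (Real.rpow_pos_of_pos hp _) h5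
      have e2 : (a + x)⁻¹ * f (1 / (a + x)) = 1 / (1 + 1.8 * (a + x)) := by
        rw [hf]; field_simp
      rw [e, mul_right_comm, e2, mul_comm]
      gcongr
    have hs : ∑ a : ({1, 2} : Finset ℕ), (((a:ℕ):ℝ) + x) ^ (-(1 + 1/50:ℝ)) * f (1 / (((a:ℕ):ℝ) + x)) =
        ((1:ℝ) + x) ^ (-(1 + 1/50:ℝ)) * f (1 / ((1:ℝ) + x)) + ((2:ℝ) + x) ^ (-(1 + 1/50:ℝ)) * f (1 / ((2:ℝ) + x)) := by
      rw [Finset.sum_coe_sort ({1, 2} : Finset ℕ) (fun a : ℕ => (((a:ℕ):ℝ) + x) ^ (-(1 + 1/50:ℝ)) * f (1 / (((a:ℕ):ℝ) + x)))]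
      rw [Finset.sum_pair (by norm_num)]
      norm_num
    rw [hs]
    refine le_trans ?_ (add_le_add (aux 1 le_rfl (by norm_num)) (aux 2 (by norm_num) le_rfl))
    rw [hf]
    have p1 : 0 < x + 1.8 := by linarith
    have p2 : 0 < 1 + 1.8 * (1 + x) := by linarith
    have p3 : 0 < 1 + 1.8 * (2 + x) := by linarith
    rw [← mul_add, div_add_div _ _ p2.ne' p3.ne', div_mul_div_comm, div_le_div_iff₀ p1 (by positivity)]
    nlinarith [mul_nonneg hx0 hx0]) N 0 ⟨le_rfl, zero_le_one⟩
  have h2 : ∀ w : Fin N → ({1, 2} : Finset ℕ), (wm w 1 0 * 0 + wm w 1 1) ^ (-(1 + 1/50 : ℝ)) * f (mob (wm w) 0) ≤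
      (wm w 1 1) ^ (-(1 + 1/50 : ℝ)) * f 0 := by
    intro w
    rw [mul_zero, zero_add]
    have h0 := (wm_good hA w).mob_nonneg le_rfl
    have h1 := (wm_good hA w).one
    apply mul_le_mul_of_nonneg_left _ (Real.rpow_nonneg (by linarith) _)
    rw [hf]
    apply one_div_le_one_div_of_le <;> linarith
  have h3 := key.trans (Finset.sum_le_sum fun w _ => h2 w)
  rw [← Finset.sum_mul] at h3
  have f0 : 0 < f 0 := by rw [hf]; norm_num
  exact (le_mul_iff_one_le_left f0).1 h3

end

section -- part F2

theorem cf_step {A : Finset ℕ} {x : ℝ} (hx : x ∈ cfRestricted (A : Set ℕ)) :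
    ∃ a : A, ∃ y ∈ cfRestricted (A : Set ℕ), x = 1 / (((a:ℕ):ℝ) + y) := by
  obtain ⟨⟨h0, h1⟩, hi, hc⟩ := hx
  have hir : Irrational (gaussMap x) := by
    unfold gaussMap Int.fract
    exact hi.inv.sub_intCast _
  refine ⟨⟨cfa 0 x, hc 0⟩, gaussMap x, ⟨⟨?_, ?_⟩, hir, fun i => hc (i+1)⟩, ?_⟩
  · exact lt_of_le_of_ne (Int.fract_nonneg _) hir.ne_zero.symm
  · exact Int.fract_lt_one _
  · have : ((cfa 0 x : ℕ):ℝ) + gaussMap x = x⁻¹ := by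
      rw [cfa, gaussMap, natCast_floor_eq_intCast_floor (by positivity)]
      exact Int.floor_add_fract _
    simp only [this]
    simp

theorem cf_cover {A : Finset ℕ} (hA : ∀ a ∈ A, 1 ≤ a) (N : ℕ) {x : ℝ} (hx : x ∈ cfRestricted (A : Set ℕ)) :
    ∃ w : Fin N → A, ∃ y ∈ cfRestricted (A : Set ℕ), x = mob (wm w) y := by
  induction N generalizing x with
  | zero => exact ⟨Fin.elim0, x, hx, by simp [wm, wmat_zero, mob]⟩
  | succ N ih =>
    obtain ⟨a, y, hy, rfl⟩ := cf_step hx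
    obtain ⟨w, z, hz, rfl⟩ := ih hy
    exact ⟨Fin.cons a w, z, hz, (wm_mob_cons hA a w hz.1.1.le).symm⟩

theorem wm_diam {A : Finset ℕ} (hA : ∀ a ∈ A, 1 ≤ a) {N : ℕ} (w : Fin N → A) :
    Metric.ediam (mob (wm w) '' Set.Icc 0 1) ≤ ENNReal.ofReal ((wm w 1 1) ^ (-2 : ℝ)) := by
  apply Metric.ediam_le
  rintro _ ⟨y, hy, rfl⟩ _ ⟨z, hz, rfl⟩
  rw [edist_dist, Real.dist_eq]
  apply ENNReal.ofReal_le_ofReal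
  have g := wm_good hA w
  have h1 := g.one
  rw [mob_sub g hy.1 hz.1, abs_div, abs_mul, wm_det, abs_neg_one_pow, one_mul,
    abs_of_pos (mul_pos (g.den_pos hy.1) (g.den_pos hz.1)),
    Real.rpow_neg (by linarith), ← one_div, show (2:ℝ) = ((2:ℕ):ℝ) by norm_num, Real.rpow_natCast]
  have h2 : |y - z| ≤ 1 := by rw [abs_le]; constructor <;> linarith [hy.1, hy.2, hz.1, hz.2]
  have h3 := g.den_ge hy.1
  have h4 := g.den_ge hz.1
  have h5 := (g.den_pos hy.1).le
  rw [pow_two]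
  gcongr

theorem Z_of_dim {A : Finset ℕ} (hA : ∀ a ∈ A, 1 ≤ a)
    (hd : (1 / 2 : ℝ≥0∞) < dimH (cfRestricted (A : Set ℕ))) : ∃ σ c0 : ℝ, 0 < σ ∧ 0 < c0 ∧
    ∀ᶠ m : ℕ in atTop, c0 ≤ ∑ w : Fin (2 * m) → A, (wm w 1 1) ^ (-(1 + σ)) := by
  obtain ⟨d, hd1, hd2⟩ := ENNReal.lt_iff_exists_nnreal_btwn.1 hd
  have hd1' : (1/2:ℝ) < d := by
    have := (ENNReal.toReal_lt_toReal (by simp) (by simp)).2 hd1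
    simpa using this
  have htop := hausdorffMeasure_of_lt_dimH hd2
  have hl := Measure.hausdorffMeasure_le_liminf_sum (β := ℕ) (ι := fun m => (Fin (2 * m) → A)) (d:ℝ)
    (cfRestricted (A : Set ℕ)) (l := atTop) (fun m => ENNReal.ofReal ((1/4) ^ m)) (by
      rw [← ENNReal.ofReal_zero]
      exact ENNReal.tendsto_ofReal (tendsto_pow_atTop_nhds_zero_of_lt_one (by norm_num) (by norm_num)))
    (fun m w => mob (wm w) '' Set.Icc 0 1) (Eventually.of_forall fun m w => by
      refine (wm_diam hA w).trans (ENNReal.ofReal_le_ofReal ?_)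
      have h := wm_ge hA w
      have h0 : 0 < wm w 1 1 := lt_of_lt_of_le (by positivity) h
      rw [Real.rpow_neg h0.le, show (2:ℝ) = ((2:ℕ):ℝ) by norm_num, Real.rpow_natCast, one_div, inv_pow]
      have : (4:ℝ) ^ m ≤ wm w 1 1 ^ 2 := by
        calc (4:ℝ) ^ m = (2 ^ m) ^ 2 := by rw [← pow_mul, mul_comm, pow_mul]; norm_num
          _ ≤ _ := by gcongr
      gcongr) (Eventually.of_forall fun m x hx => by
      obtain ⟨w, y, hy, rfl⟩ := cf_cover hA (2 * m) hx
      exact Set.mem_iUnion.2 ⟨w, y, ⟨hy.1.1.le, hy.1.2.le⟩, rfl⟩)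
  rw [htop, top_le_iff] at hl
  refine ⟨2 * d - 1, 1, by linarith, one_pos, ?_⟩
  have hev := eventually_lt_of_lt_liminf (b := (1:ℝ≥0∞)) (by rw [hl]; exact ENNReal.one_lt_top)
  filter_upwards [hev] with m hm
  have : (1:ℝ≥0∞) ≤ ENNReal.ofReal (∑ w : Fin (2 * m) → A, (wm w 1 1) ^ (-(1 + (2 * (d:ℝ) - 1)))) := by
    refine hm.le.trans ?_
    rw [ENNReal.ofReal_sum_of_nonneg (fun w _ => Real.rpow_nonneg (by linarith [(wm_good hA w).one]) _)]
    apply Finset.sum_le_sum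
    intro w _
    have h0 : 0 < wm w 1 1 := by linarith [(wm_good hA w).one]
    refine (ENNReal.rpow_le_rpow (wm_diam hA w) (NNReal.coe_nonneg d)).trans (le_of_eq ?_)
    rw [ENNReal.ofReal_rpow_of_pos (by positivity), ← Real.rpow_mul h0.le]
    congr 2
    ring
  rwa [ENNReal.one_le_ofReal] at this

theorem main_thm :
    (∀ A : Finset ℕ, (∀ a ∈ A, 1 ≤ a) → 2 ≤ A.card →
      (1 / 2 : ℝ≥0∞) < dimH (cfRestricted (A : Set ℕ)) →
      {x : ℝ | x ∈ cfRestricted (A : Set ℕ) ∧ ∀ q : ℕ, 2 ≤ q → IsNormal q x}.Infinite) ∧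
    {x : ℝ | x ∈ cfRestricted {1, 2} ∧ ∀ q : ℕ, 2 ≤ q → IsNormal q x}.Infinite := by
  constructor
  · intro A hA _ hd
    obtain ⟨σ, c0, h1, h2, h3⟩ := Z_of_dim hA hd
    exact infinite_of_Z hA h1 h2 h3
  · obtain ⟨σ, c0, h1, h2, h3⟩ := Z_one_two
    have := infinite_of_Z (A := {1, 2}) (by decide) h1 h2 h3
    simpa using this

end

/-- If `𝒜` is a finite set of positive integers with `|𝒜| ≥ 2` and `dim_H F(𝒜) > 1/2`, then
`F(𝒜)` contains infinitely many numbers normal to every base `q ≥ 2`; in particular there are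
infinitely many absolutely normal numbers whose partial quotients all lie in `{1, 2}`. -/
theorem normal_numbers_with_restricted_partial_quotients :
    (∀ A : Finset ℕ, (∀ a ∈ A, 1 ≤ a) → 2 ≤ A.card →
      (1 / 2 : ℝ≥0∞) < dimH (cfRestricted (A : Set ℕ)) →
      {x : ℝ | x ∈ cfRestricted (A : Set ℕ) ∧ ∀ q : ℕ, 2 ≤ q → IsNormal q x}.Infinite) ∧
    {x : ℝ | x ∈ cfRestricted {1, 2} ∧ ∀ q : ℕ, 2 ≤ q → IsNormal q x}.Infinite := by
  exact main_thm
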